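/- Let q(x, y) = ax² + bxy + cy² be a primitive positive definite binary integer quadratic form and let N be a positive integer. Then q represents infinitely many primes p with p ∤ N and p odd; in particular there exist integers x, y with q(x, y) = p a prime, p odd, p ∤ N, and gcd(x, y) = 1. -/

import Mathlib

/-!
Let `-m` be the discriminant of the form. After a unimodular substitution `a` is prime to `m`, and
then the ideal `(a, ω)` of the ring of integers of `ℚ(√-m)`, with `ω` a root of `X² - bX + ac`,
has norm `a`. If a prime ideal `v` lies in the ray class modulo `m` of the inverse of `(a, ω)`,
then `v · (a, ω)` is principal with a generator `a x + y ω`, so that dividing norms by `a` gives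
`N(v) = a x² + b x y + c y²`. It remains to find infinitely many primes of prime norm in each ray
class. The theta series of a ray class is, up to a bounded error, a multiple of `1 / t` that does
not depend on the class, so the `L`-series of every nontrivial character of the finite ray class
group continues to `0 < re s`, and that of the trivial character does so up to a simple pole at
`1`. None of them vanishes at `1`: otherwise the product of all of them would be regular there,
and since minus its logarithmic derivative has nonnegative coefficients, Landau's argument would
make `∑ N(v) ^ (-1/2)` finite, contradicting that pole. Orthogonality of characters then makes
`∑ log N(v) / N(v)` diverge over each ray class, whereas the primes of composite norm contribute a
convergent part.
-/

section GaussianSums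

open Real HurwitzZeta

theorem summable_mul_of_abs_sub_le {ι : Type*} {f g : ι → ℝ} {a ε : ℝ} (hf : Summable f)
    (hf₀ : ∀ i, 0 ≤ f i) (hg : ∀ i, |g i - a| ≤ ε) : Summable fun i ↦ f i * g i := by
  have hdiff : Summable fun i ↦ f i * (g i - a) := by
    refine .of_norm_bounded (hf.mul_right ε) fun i ↦ ?_
    rw [norm_mul, norm_of_nonneg (hf₀ i)]
    exact mul_le_mul_of_nonneg_left (hg i) (hf₀ i)
  exact (hdiff.add (hf.mul_right a)).congr fun i ↦ by ring

theorem abs_tsum_mul_sub_le {ι : Type*} {f g : ι → ℝ} {a ε : ℝ} (hf : Summable f)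
    (hf₀ : ∀ i, 0 ≤ f i) (hg : ∀ i, |g i - a| ≤ ε) :
    |(∑' i, f i * g i) - (∑' i, f i) * a| ≤ (∑' i, f i) * ε := by
  rw [← tsum_mul_right, ← tsum_mul_right,
    ← (summable_mul_of_abs_sub_le hf hf₀ hg).tsum_sub (hf.mul_right a), ← norm_eq_abs]
  refine tsum_of_norm_bounded (hf.mul_right ε).hasSum fun i ↦ ?_
  rw [← mul_sub, norm_mul, norm_of_nonneg (hf₀ i)]
  exact mul_le_mul_of_nonneg_left (hg i) (hf₀ i)

theorem exp_neg_pi_mul_sq_mul_le {n : ℝ} (hn : n ≠ 0) {t : ℝ} (ht : 0 < t) :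
    rexp (-π * n ^ 2 * t) ≤ 1 / n ^ 2 / t := by
  have hpos : 0 < n ^ 2 * t := by positivity
  calc rexp (-π * n ^ 2 * t) ≤ rexp (-(n ^ 2 * t)) := by
        gcongr
        nlinarith [pi_gt_three]
    _ ≤ (n ^ 2 * t)⁻¹ := by
        rw [exp_neg]
        exact inv_anti₀ hpos (by linarith [add_one_le_exp (n ^ 2 * t)])
    _ = 1 / n ^ 2 / t := by field_simp

theorem abs_cosKernel_sub_one_le (w : ℝ) {t : ℝ} (ht : 0 < t) :
    |cosKernel w t - 1| ≤ (∑' n : ℤ, 1 / (n : ℝ) ^ 2) / t := by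
  have hsum : Summable fun n : ℤ ↦ 1 / (n : ℝ) ^ 2 := summable_one_div_int_pow.mpr one_lt_two
  have hcos := (hasSum_int_cosKernel₀ w ht).tsum_eq
  rw [← norm_eq_abs, ← Complex.norm_real, Complex.ofReal_sub, Complex.ofReal_one, ← hcos]
  refine tsum_of_norm_bounded (hsum.hasSum.div_const t) fun n ↦ ?_
  split_ifs with hn
  · simp [hn]
  · rw [norm_mul, Complex.norm_real, norm_of_nonneg (exp_pos _).le,
      show (2 * π * Complex.I * w * n : ℂ) = ((2 * π * w * n : ℝ) : ℂ) * Complex.I by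
        push_cast; ring, Complex.norm_exp_ofReal_mul_I, one_mul]
    exact exp_neg_pi_mul_sq_mul_le (Int.cast_ne_zero.mpr hn) ht

theorem exists_abs_evenKernel_sub_le :
    ∃ C : ℝ, 0 ≤ C ∧ ∀ w t : ℝ, 0 < t → |evenKernel w t - 1 / √t| ≤ C * √t := by
  set C := ∑' n : ℤ, 1 / (n : ℝ) ^ 2
  refine ⟨C, tsum_nonneg fun n ↦ by positivity, fun w t ht ↦ ?_⟩
  have hsqrt : 0 < √t := sqrt_pos.mpr ht
  calc |evenKernel w t - 1 / √t| = 1 / √t * |cosKernel w (1 / t) - 1| := by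
        rw [evenKernel_functional_equation, ← sqrt_eq_rpow, ← mul_sub_one, abs_mul,
          abs_of_pos (one_div_pos.mpr hsqrt)]
    _ ≤ 1 / √t * (C / (1 / t)) := by
        gcongr
        exact abs_cosKernel_sub_one_le w (one_div_pos.mpr ht)
    _ = C * √t := by
        nth_rewrite 2 [← mul_self_sqrt ht.le]
        field_simp

/-- The Gaussian at time `t` of the positive definite form `(x + βy)² + δy²`, translated by
`(u, v)` and restricted to `ℤ²`; its sum over `ℤ²` is a binary theta function. -/
noncomputable def quadGaussian (β δ u v t : ℝ) (p : ℤ × ℤ) : ℝ :=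
  rexp (-π * ((p.1 + u + β * (p.2 + v)) ^ 2 + δ * (p.2 + v) ^ 2) * t)

variable (β u v : ℝ) {δ t : ℝ}

theorem hasSum_quadGaussian_fst (ht : 0 < t) (y : ℤ) :
    HasSum (fun x : ℤ ↦ quadGaussian β δ u v t (x, y))
      (rexp (-π * (y + v) ^ 2 * (δ * t)) * evenKernel (u + β * (y + v) : ℝ) t) := by
  refine ((hasSum_int_evenKernel (u + β * (y + v)) ht).mul_left _).congr_fun fun x ↦ ?_
  rw [quadGaussian, ← exp_add]
  ring_nf

theorem summable_exp_mul_evenKernel (hδ : 0 < δ) (ht : 0 < t) :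
    Summable fun y : ℤ ↦
      rexp (-π * (y + v) ^ 2 * (δ * t)) * evenKernel (u + β * (y + v) : ℝ) t := by
  obtain ⟨C, -, hC⟩ := exists_abs_evenKernel_sub_le
  exact summable_mul_of_abs_sub_le (hasSum_int_evenKernel v (mul_pos hδ ht)).summable
    (fun _ ↦ (exp_pos _).le) fun _ ↦ hC _ t ht

theorem summable_quadGaussian (hδ : 0 < δ) (ht : 0 < t) :
    Summable (quadGaussian β δ u v t) := by
  refine (Equiv.prodComm ℤ ℤ).summable_iff.mp
    ((summable_prod_of_nonneg fun p ↦ (exp_pos _).le).mpr ⟨fun y ↦ ?_, ?_⟩)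
  · exact (hasSum_quadGaussian_fst β u v ht y).summable
  · exact (summable_exp_mul_evenKernel β u v hδ ht).congr fun y ↦
      (hasSum_quadGaussian_fst β u v ht y).tsum_eq.symm

theorem tsum_quadGaussian (hδ : 0 < δ) (ht : 0 < t) :
    ∑' p, quadGaussian β δ u v t p =
      ∑' y : ℤ, rexp (-π * (y + v) ^ 2 * (δ * t)) * evenKernel (u + β * (y + v) : ℝ) t := by
  have hswap := (Equiv.prodComm ℤ ℤ).summable_iff.mpr (summable_quadGaussian β u v hδ ht)
  rw [← (Equiv.prodComm ℤ ℤ).tsum_eq]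
  exact hswap.tsum_prod.trans (tsum_congr fun y ↦ (hasSum_quadGaussian_fst β u v ht y).tsum_eq)

theorem exists_abs_tsum_quadGaussian_sub_le (hδ : 0 < δ) :
    ∃ C : ℝ, 0 ≤ C ∧ ∀ u v t : ℝ, 0 < t →
      |∑' p, quadGaussian β δ u v t p - 1 / (√δ * t)| ≤ C * (1 + t) := by
  obtain ⟨C, hC₀, hC⟩ := exists_abs_evenKernel_sub_le
  refine ⟨C * √δ + C * (1 / √δ) + C * (C * √δ), by positivity, fun u v t ht ↦ ?_⟩
  have hδt : 0 < δ * t := mul_pos hδ ht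
  have hsqrt : 0 < √t := sqrt_pos.mpr ht
  have hmain : 1 / (√δ * t) = 1 / (√δ * √t) * (1 / √t) := by
    rw [div_mul_div_comm, mul_assoc, mul_self_sqrt ht.le, one_mul]
  have hinner := hasSum_int_evenKernel v hδt
  have houter := abs_tsum_mul_sub_le hinner.summable (fun _ ↦ (exp_pos _).le)
    fun y : ℤ ↦ hC (u + β * (y + v)) t ht
  rw [← tsum_quadGaussian β u v hδ ht, hinner.tsum_eq] at houter
  set K := evenKernel v (δ * t)
  have hK : |K - 1 / (√δ * √t)| ≤ C * (√δ * √t) := by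
    rw [← sqrt_mul hδ.le]
    exact hC v _ hδt
  calc |∑' p, quadGaussian β δ u v t p - 1 / (√δ * t)|
      ≤ |∑' p, quadGaussian β δ u v t p - K * (1 / √t)|
          + |(K - 1 / (√δ * √t)) * (1 / √t)| := by
        refine (abs_add_le _ _).trans_eq' (congrArg _ ?_)
        rw [hmain]
        ring
    _ ≤ (1 / (√δ * √t) + C * (√δ * √t)) * (C * √t) + C * (√δ * √t) * (1 / √t) := by
        refine add_le_add (houter.trans ?_) ?_
        · gcongr
          linarith [(abs_le.mp hK).2]
        · rw [abs_mul, abs_of_pos (one_div_pos.mpr hsqrt)]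
          gcongr
    _ = C * √δ + C * (1 / √δ) + C * (C * √δ) * t := by
        nth_rewrite 6 [← sq_sqrt ht.le]
        field_simp
        ring
    _ ≤ (C * √δ + C * (1 / √δ) + C * (C * √δ)) * (1 + t) := by
        have : 0 ≤ (C * √δ + C * (1 / √δ)) * t := by positivity
        have : 0 ≤ C * (C * √δ) := by positivity
        linarith

end GaussianSums

section IndexedDirichletSeries

open Real

variable {ι : Type*} {ν : ι → ℕ}

/-- The sum of the weights `w i` over the fiber `ν i = n`: the coefficient of `n ^ (-s)` in the
Dirichlet series `∑ᵢ w i * ν i ^ (-s)` indexed by `ι`. -/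
noncomputable def fiberSum (ν : ι → ℕ) (w : ι → ℂ) (n : ℕ) : ℂ := ∑' i : {i // ν i = n}, w i

theorem lSeriesHasSum_fiberSum (hν : ∀ i, 1 ≤ ν i) {w : ι → ℂ} {s : ℂ}
    (hs : Summable fun i ↦ ‖w i‖ * (ν i : ℝ) ^ (-s.re)) :
    LSeriesHasSum (fiberSum ν w) s (∑' i, w i * (ν i : ℂ) ^ (-s)) := by
  have hsum : Summable fun i ↦ w i * (ν i : ℂ) ^ (-s) := by
    refine .of_norm (hs.congr fun i ↦ ?_)
    rw [norm_mul, Complex.norm_natCast_cpow_of_pos (hν i), Complex.neg_re]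
  have hfibers := (Equiv.sigmaFiberEquiv ν).hasSum_iff.mpr hsum.hasSum
  refine (hfibers.sigma fun n ↦ (hfibers.summable.sigma_factor n).hasSum).congr_fun fun n ↦ ?_
  rcases Nat.eq_zero_or_pos n with rfl | hn
  · have : IsEmpty {i // ν i = 0} := ⟨fun i ↦ by have := hν i.1; have := i.2; omega⟩
    simp
  · rw [LSeries.term_of_ne_zero hn.ne', fiberSum, div_eq_mul_inv, ← Complex.cpow_neg,
      ← tsum_mul_right]
    refine tsum_congr fun i ↦ ?_
    simp [Equiv.sigmaFiberEquiv, i.2]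

theorem fiberSum_log_mul (ν : ι → ℕ) (w : ι → ℂ) :
    fiberSum ν (fun i ↦ (log (ν i) : ℂ) * w i) = LSeries.logMul (fiberSum ν w) := by
  ext n
  rw [LSeries.logMul, fiberSum, fiberSum, ← tsum_mul_left]
  refine tsum_congr fun i ↦ ?_
  rw [i.2, Complex.ofReal_log n.cast_nonneg, Complex.ofReal_natCast]

theorem rpow_neg_le_geometric_mul_exp {n : ℕ} (hn : 1 ≤ n) {σ : ℝ} (hσ : 0 ≤ σ) :
    (n : ℝ) ^ (-σ) ≤
      rexp 2 * (((2 : ℝ) ^ (-σ)) ^ Nat.log 2 n * rexp (-n * (1 / 2) ^ Nat.log 2 n)) := by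
  set j := Nat.log 2 n
  have hle : (2 : ℝ) ^ j ≤ n := by exact_mod_cast Nat.pow_log_le_self 2 (by omega)
  have hge : (n : ℝ) * (1 / 2) ^ j ≤ 2 := by
    have := (Nat.lt_pow_succ_log_self (b := 2) one_lt_two n).le
    rw [pow_succ'] at this
    rw [one_div, inv_pow, ← div_eq_mul_inv, div_le_iff₀ (by positivity)]
    exact_mod_cast this
  calc (n : ℝ) ^ (-σ) ≤ ((2 : ℝ) ^ j) ^ (-σ) :=
        rpow_le_rpow_of_nonpos (by positivity) hle (neg_nonpos.mpr hσ)
    _ = ((2 : ℝ) ^ (-σ)) ^ j * 1 := by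
        rw [mul_one, rpow_pow_comm two_pos.le]
    _ ≤ ((2 : ℝ) ^ (-σ)) ^ j * (rexp 2 * rexp (-n * (1 / 2) ^ j)) := by
        rw [← exp_add]
        gcongr
        exact one_le_exp (by linarith)
    _ = _ := by ring

theorem summable_rpow_neg_of_tsum_exp_le (hν : ∀ i, 1 ≤ ν i) {C : ℝ}
    (hs : ∀ t : ℝ, 0 < t → Summable fun i ↦ rexp (-(ν i) * t))
    (hC : ∀ t : ℝ, 0 < t → t ≤ 1 → ∑' i, rexp (-(ν i) * t) ≤ C / t) {σ : ℝ} (hσ : 1 < σ) :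
    Summable fun i ↦ (ν i : ℝ) ^ (-σ) := by
  have hpos (j : ℕ) : (0 : ℝ) < (1 / 2) ^ j := by positivity
  have hgeom : Summable fun j : ℕ ↦ C * ((2 : ℝ) ^ (1 - σ)) ^ j :=
    (summable_geometric_of_lt_one (by positivity)
      (rpow_lt_one_of_one_lt_of_neg one_lt_two (by linarith))).mul_left C
  have hdyadic : Summable fun p : ℕ × ι ↦
      ((2 : ℝ) ^ (-σ)) ^ p.1 * rexp (-(ν p.2) * (1 / 2) ^ p.1) := by
    refine (summable_prod_of_nonneg fun p ↦ by positivity).mpr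
      ⟨fun j ↦ (hs _ (hpos j)).mul_left (((2 : ℝ) ^ (-σ)) ^ j), ?_⟩
    refine hgeom.of_nonneg_of_le (fun j ↦ tsum_nonneg fun i ↦ by positivity) fun j ↦ ?_
    simp only [tsum_mul_left]
    calc ((2 : ℝ) ^ (-σ)) ^ j * ∑' i, rexp (-(ν i) * (1 / 2) ^ j)
        ≤ ((2 : ℝ) ^ (-σ)) ^ j * (C / (1 / 2) ^ j) := by
          gcongr
          exact hC _ (hpos j) (pow_le_one₀ (by norm_num) (by norm_num))
      _ = C * ((2 : ℝ) ^ (1 - σ)) ^ j := by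
          rw [sub_eq_add_neg, rpow_add two_pos, mul_pow, rpow_one, one_div, inv_pow, div_inv_eq_mul]
          ring
  have hinj : Function.Injective fun i : ι ↦ (Nat.log 2 (ν i), i) :=
    fun i j h ↦ (Prod.ext_iff.mp h).2
  exact ((hdyadic.comp_injective hinj).mul_left (rexp 2)).of_nonneg_of_le
    (fun i ↦ by positivity) fun i ↦ rpow_neg_le_geometric_mul_exp (hν i) (by linarith)

theorem summable_log_mul_rpow_neg (hν : ∀ i, 1 ≤ ν i)
    (hs : ∀ σ : ℝ, 1 < σ → Summable fun i ↦ (ν i : ℝ) ^ (-σ)) {σ : ℝ} (hσ : 1 < σ) :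
    Summable fun i ↦ log (ν i) * (ν i : ℝ) ^ (-σ) := by
  obtain ⟨ρ, hρ, hρσ⟩ := exists_between hσ
  refine ((hs ρ hρ).mul_left (1 / (σ - ρ))).of_nonneg_of_le (fun i ↦ by positivity) fun i ↦ ?_
  have hpos : (0 : ℝ) < ν i := by exact_mod_cast hν i
  calc log (ν i) * (ν i : ℝ) ^ (-σ) ≤ (ν i : ℝ) ^ (σ - ρ) / (σ - ρ) * (ν i : ℝ) ^ (-σ) := by
        gcongr
        exact log_le_rpow_div hpos.le (sub_pos.mpr hρσ)
    _ = 1 / (σ - ρ) * (ν i : ℝ) ^ (-ρ) := by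
        rw [show -ρ = σ - ρ + -σ by ring, rpow_add hpos]
        ring

end IndexedDirichletSeries

section MellinContinuation

open Real Filter Topology Asymptotics MeasureTheory

/-- The function `e⁻ᵗ / t`, which has the singularity of `1 / t` at `0` and Mellin transform
`Γ(s - 1)`. -/
noncomputable def expNegDiv (t : ℝ) : ℂ := (rexp (-t) / t : ℝ)

theorem norm_expNegDiv {t : ℝ} (ht : 0 < t) : ‖expNegDiv t‖ = rexp (-t) / t := by
  rw [expNegDiv, Complex.norm_real, norm_of_nonneg (by positivity)]

theorem continuousOn_expNegDiv : ContinuousOn expNegDiv (Set.Ioi 0) := by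
  refine Complex.continuous_ofReal.comp_continuousOn ?_
  exact .div (by fun_prop) (by fun_prop) fun t ht ↦ ne_of_gt ht

theorem expNegDiv_isBigO_atTop : expNegDiv =O[atTop] fun t ↦ rexp (-1 * t) := by
  refine .of_bound 1 ?_
  filter_upwards [eventually_ge_atTop (1 : ℝ)] with t ht
  rw [norm_expNegDiv (by linarith), one_mul, norm_of_nonneg (exp_pos _).le, neg_one_mul]
  exact div_le_self (exp_pos _).le ht

theorem expNegDiv_isBigO_zero : expNegDiv =O[𝓝[>] 0] fun t ↦ t ^ (-1 : ℝ) := by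
  refine .of_bound 1 ?_
  filter_upwards [self_mem_nhdsWithin] with t (ht : 0 < t)
  rw [norm_expNegDiv ht, one_mul, norm_of_nonneg (by positivity), rpow_neg_one, div_eq_mul_inv]
  exact mul_le_of_le_one_left (by positivity) (exp_le_one_iff.mpr (by linarith))

theorem norm_expNegDiv_sub_le {t : ℝ} (ht : 0 < t) : ‖expNegDiv t - 1 / t‖ ≤ 1 := by
  have hexp : rexp (-t) ≤ 1 := exp_le_one_iff.mpr (by linarith)
  rw [expNegDiv, show ((rexp (-t) / t : ℝ) : ℂ) - 1 / t = -((1 - rexp (-t)) / t : ℝ) by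
      push_cast; ring, norm_neg, Complex.norm_real,
    norm_of_nonneg (div_nonneg (by linarith) ht.le), div_le_one ht]
  linarith [add_one_le_exp (-t)]

theorem hasMellin_expNegDiv {s : ℂ} (hs : 1 < s.re) :
    HasMellin expNegDiv s (Complex.Gamma (s - 1)) := by
  refine ⟨mellinConvergent_of_isBigO_rpow_exp one_pos
    (continuousOn_expNegDiv.locallyIntegrableOn measurableSet_Ioi) expNegDiv_isBigO_atTop
    expNegDiv_isBigO_zero hs, ?_⟩
  have heq : mellin expNegDiv s = mellin (fun t ↦ (t : ℂ) ^ (-1 : ℂ) • (rexp (-t) : ℂ)) s := by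
    congr 1
    ext t
    rw [expNegDiv, smul_eq_mul, Complex.cpow_neg_one, mul_comm, Complex.ofReal_div, div_eq_mul_inv]
  rw [heq, mellin_cpow_smul, ← Complex.GammaIntegral_eq_mellin, ← sub_eq_add_neg,
    Complex.Gamma_eq_integral (by simpa using hs)]

-- Subtracting `κ * expNegDiv` removes the singularity `κ / t`, and `Γ(s - 1) = Γ(s) / (s - 1)`.
theorem exists_differentiableOn_mellin_eq {F : ℝ → ℂ} {κ : ℂ} (hcont : ContinuousOn F (Set.Ioi 0))
    (htop : F =O[atTop] fun t ↦ rexp (-1 * t))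
    (hzero : (fun t : ℝ ↦ F t - κ / t) =O[𝓝[>] 0] fun _ ↦ (1 : ℝ)) :
    ∃ E : ℂ → ℂ, DifferentiableOn ℂ E {s | 0 < s.re} ∧
      ∀ s : ℂ, 1 < s.re → mellin F s = Complex.Gamma s * (E s + κ / (s - 1)) := by
  set f : ℝ → ℂ := fun t ↦ F t - κ • expNegDiv t with hf
  have hfcont : ContinuousOn f (Set.Ioi 0) := hcont.sub (continuousOn_expNegDiv.const_smul κ)
  have hloc : LocallyIntegrableOn f (Set.Ioi 0) := hfcont.locallyIntegrableOn measurableSet_Ioi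
  have hftop : f =O[atTop] fun t ↦ rexp (-1 * t) :=
    htop.sub (expNegDiv_isBigO_atTop.const_smul_left κ)
  have hpole : (fun t ↦ expNegDiv t - 1 / t) =O[𝓝[>] 0] fun _ ↦ (1 : ℝ) := by
    refine .of_bound 1 ?_
    filter_upwards [self_mem_nhdsWithin] with t ht
    simpa using norm_expNegDiv_sub_le ht
  have hfzero : f =O[𝓝[>] 0] fun t : ℝ ↦ t ^ (-0 : ℝ) := by
    refine (hzero.sub (hpole.const_smul_left κ)).congr (fun t ↦ ?_) fun t ↦ by simp
    simp only [hf, Pi.smul_apply, smul_eq_mul]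
    ring
  refine ⟨fun s ↦ mellin f s * (Complex.Gamma s)⁻¹, fun s hs ↦ ?_, fun s hs ↦ ?_⟩
  · exact ((mellin_differentiableAt_of_isBigO_rpow_exp one_pos hloc hftop hfzero hs).mul
      Complex.differentiable_one_div_Gamma.differentiableAt).differentiableWithinAt
  · have hs₀ : 0 < s.re := one_pos.trans hs
    have hs₁ : s - 1 ≠ 0 := sub_ne_zero.mpr fun h ↦ by simp [h] at hs
    have hΓ : Complex.Gamma s ≠ 0 := Complex.Gamma_ne_zero_of_re_pos hs₀
    have hΓ_succ : Complex.Gamma s = (s - 1) * Complex.Gamma (s - 1) := by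
      simpa using Complex.Gamma_add_one (s - 1) hs₁
    obtain ⟨hconv, hmellin⟩ := hasMellin_expNegDiv hs
    calc mellin F s = mellin (fun t ↦ f t + κ • expNegDiv t) s := by simp [hf]
      _ = mellin f s + κ * Complex.Gamma (s - 1) := by
          rw [(hasMellin_add (mellinConvergent_of_isBigO_rpow_exp one_pos hloc hftop hfzero hs₀)
            (hconv.const_smul κ)).2, mellin_const_smul, hmellin, smul_eq_mul]
      _ = Complex.Gamma s * (mellin f s * (Complex.Gamma s)⁻¹ + κ / (s - 1)) := by
          rw [mul_add, mul_left_comm, mul_inv_cancel₀ hΓ, mul_one, hΓ_succ]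
          field_simp

variable {ι : Type*} {ν : ι → ℕ} {w : ι → ℂ} (hw : ∀ i, ‖w i‖ ≤ 1)
  (hs : ∀ t : ℝ, 0 < t → Summable fun i ↦ rexp (-(ν i) * t))

include hw

theorem norm_mul_exp_le_exp (i : ι) (t : ℝ) : ‖w i * rexp (-(ν i) * t)‖ ≤ rexp (-(ν i) * t) := by
  rw [norm_mul, Complex.norm_real, norm_of_nonneg (exp_pos _).le]
  exact mul_le_of_le_one_left (exp_pos _).le (hw i)

include hs

theorem continuousOn_weighted_tsum_exp :
    ContinuousOn (fun t : ℝ ↦ ∑' i, w i * rexp (-(ν i) * t)) (Set.Ioi 0) := by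
  intro t ht
  have hcont : ContinuousOn (fun t : ℝ ↦ ∑' i, w i * rexp (-(ν i) * t)) (Set.Ioi (t / 2)) := by
    refine continuousOn_tsum (fun i ↦ by fun_prop) (hs _ (half_pos ht)) fun i x hx ↦
      (norm_mul_exp_le_exp hw i x).trans (exp_le_exp.mpr ?_)
    exact mul_le_mul_of_nonpos_left hx.le (by simp)
  exact (hcont.continuousAt (Ioi_mem_nhds (half_lt_self ht))).continuousWithinAt

theorem weighted_tsum_exp_isBigO_atTop (hν : ∀ i, 1 ≤ ν i) :
    (fun t : ℝ ↦ ∑' i, w i * rexp (-(ν i) * t)) =O[atTop] fun t ↦ rexp (-1 * t) := by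
  refine .of_bound (rexp 1 * ∑' i, rexp (-(ν i) * 1)) ?_
  filter_upwards [eventually_ge_atTop (1 : ℝ)] with t ht
  rw [norm_of_nonneg (exp_pos _).le, ← tsum_mul_left, ← tsum_mul_right]
  refine tsum_of_norm_bounded (((hs 1 one_pos).mul_left _).mul_right _).hasSum fun i ↦
    (norm_mul_exp_le_exp hw i t).trans ?_
  rw [← exp_add, ← exp_add]
  have : (1 : ℝ) ≤ ν i := by exact_mod_cast hν i
  exact exp_le_exp.mpr (by nlinarith)

theorem mellin_weighted_tsum_exp [Countable ι] (hν : ∀ i, 1 ≤ ν i) {s : ℂ} (hs₀ : 0 < s.re)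
    (hsum : Summable fun i ↦ (ν i : ℝ) ^ (-s.re)) :
    mellin (fun t : ℝ ↦ ∑' i, w i * rexp (-(ν i) * t)) s =
      Complex.Gamma s * ∑' i, w i * (ν i : ℂ) ^ (-s) := by
  have hterms : HasSum (fun i ↦ Complex.Gamma s * w i / ((ν i : ℝ) : ℂ) ^ s)
      (mellin (fun t : ℝ ↦ ∑' i, w i * rexp (-(ν i) * t)) s) := by
    refine hasSum_mellin (fun i ↦ .inr (by exact_mod_cast hν i)) hs₀
      (fun t ht ↦ (Summable.of_norm_bounded (hs t ht) fun i ↦ norm_mul_exp_le_exp hw i t).hasSum)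
      (hsum.of_nonneg_of_le (fun i ↦ by positivity) fun i ↦ ?_)
    rw [rpow_neg (Nat.cast_nonneg _), div_eq_mul_inv]
    exact mul_le_of_le_one_left (by positivity) (hw i)
  rw [← hterms.tsum_eq, ← tsum_mul_left]
  refine tsum_congr fun i ↦ ?_
  rw [Complex.cpow_neg, Complex.ofReal_natCast, ← mul_assoc, div_eq_mul_inv]

theorem exists_continuation_of_tsum_exp (hν : ∀ i, 1 ≤ ν i)
    (hν' : ∀ σ : ℝ, 1 < σ → Summable fun i ↦ (ν i : ℝ) ^ (-σ)) {κ : ℂ} {C : ℝ}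
    (hC : ∀ t : ℝ, 0 < t → t ≤ 1 → ‖(∑' i, w i * rexp (-(ν i) * t)) - κ / t‖ ≤ C) :
    ∃ E : ℂ → ℂ, DifferentiableOn ℂ E {s | 0 < s.re} ∧
      ∀ s : ℂ, 1 < s.re → ∑' i, w i * (ν i : ℂ) ^ (-s) = E s + κ / (s - 1) := by
  have hzero : (fun t : ℝ ↦ (∑' i, w i * rexp (-(ν i) * t)) - κ / t) =O[𝓝[>] 0]
      fun _ ↦ (1 : ℝ) := by
    refine .of_bound C ?_
    filter_upwards [Ioc_mem_nhdsGT one_pos] with t ht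
    simpa using hC t ht.1 ht.2
  obtain ⟨E, hE, hmellin⟩ := exists_differentiableOn_mellin_eq
    (continuousOn_weighted_tsum_exp hw hs) (weighted_tsum_exp_isBigO_atTop hw hs hν) hzero
  have : Countable ι := by
    simpa [Function.support_eq_univ (fun _ ↦ (exp_pos _).ne'), Set.countable_univ_iff] using
      (hs 1 one_pos).countable_support
  refine ⟨E, hE, fun s hs₁ ↦ ?_⟩
  have hs₀ : 0 < s.re := one_pos.trans hs₁
  rw [← mul_right_inj' (Complex.Gamma_ne_zero_of_re_pos hs₀), ← hmellin s hs₁,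
    mellin_weighted_tsum_exp hw hs hν hs₀ (hν' _ hs₁)]

end MellinContinuation

section MultisetSeries

variable {P : Type*}

theorem hasSum_ite_lt_count [DecidableEq P] (f : P → ℂ) (s : Multiset P) :
    HasSum (fun q : P × ℕ ↦ if q.2 < s.count q.1 then f q.1 else 0) (s.map f).sum := by
  have hrange (p : P) : (Finset.range s.card).filter (· < s.count p) =
      Finset.range (s.count p) := by
    ext k
    simp only [Finset.mem_filter, Finset.mem_range, and_iff_right_iff_imp]
    exact fun hk ↦ hk.trans_le (Multiset.count_le_card p s)
  have hsum : (s.map f).sum = ∑ q ∈ s.toFinset ×ˢ Finset.range s.card,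
      if q.2 < s.count q.1 then f q.1 else 0 := by
    rw [Finset.sum_multiset_map_count, Finset.sum_product]
    refine Finset.sum_congr rfl fun p _ ↦ ?_
    simp [← Finset.sum_filter, hrange]
  rw [hsum]
  refine hasSum_sum_of_ne_finset_zero fun q hq ↦ if_neg fun hlt ↦ hq ?_
  simp only [Finset.mem_product, Multiset.mem_toFinset, Finset.mem_range]
  exact ⟨Multiset.count_pos.mp (by omega), hlt.trans_le (Multiset.count_le_card _ _)⟩

theorem tsum_replicate_add [DecidableEq P] {F : P × ℕ → Multiset P → ℂ}
    (hF : Summable fun r : (P × ℕ) × Multiset P ↦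
      F r.1 (Multiset.replicate (r.1.2 + 1) r.1.1 + r.2)) :
    ∑' r : (P × ℕ) × Multiset P, F r.1 (Multiset.replicate (r.1.2 + 1) r.1.1 + r.2) =
      ∑' (s : Multiset P) (q : P × ℕ), if q.2 < s.count q.1 then F q s else 0 := by
  set i : (P × ℕ) × Multiset P → Multiset P × (P × ℕ) := fun r ↦
    (Multiset.replicate (r.1.2 + 1) r.1.1 + r.2, r.1) with hi
  set K : Multiset P × (P × ℕ) → ℂ := fun r ↦
    if r.2.2 < r.1.count r.2.1 then F r.2 r.1 else 0
  have hinj : Function.Injective i := by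
    rintro ⟨q, s⟩ ⟨q', s'⟩ h
    obtain ⟨h, rfl⟩ := Prod.ext_iff.mp h
    exact Prod.ext rfl (add_left_cancel h)
  have hcomp (r) : K (i r) = F r.1 (Multiset.replicate (r.1.2 + 1) r.1.1 + r.2) :=
    if_pos (by simp [hi, Multiset.count_add])
  have hrange (r) (hr : r ∉ Set.range i) : K r = 0 := by
    refine if_neg fun hlt ↦ hr ⟨(r.2, r.1 - Multiset.replicate (r.2.2 + 1) r.2.1), ?_⟩
    exact Prod.ext (add_tsub_cancel_of_le (Multiset.le_count_iff_replicate_le.mp hlt)) rfl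
  have hKsum : Summable K := (hinj.summable_iff hrange).mp (hF.congr fun r ↦ (hcomp r).symm)
  rw [← hKsum.tsum_prod, ← hinj.tsum_eq fun r hr ↦ by_contra fun h ↦ hr (hrange r h)]
  exact tsum_congr fun r ↦ (hcomp r).symm

-- This is `Λ * ζ = log` for Euler products: `s` is counted once for each prime power dividing it.
theorem tsum_primePow_mul_tsum_multiset {x : Multiset P → ℂ} (hx : ∀ s t, x (s + t) = x s * x t)
    {f : P → ℂ} (hsum : Summable fun s ↦ ‖x s‖)
    (hf : Summable fun q : P × ℕ ↦ ‖f q.1 * x (Multiset.replicate (q.2 + 1) q.1)‖) :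
    (∑' q : P × ℕ, f q.1 * x (Multiset.replicate (q.2 + 1) q.1)) * ∑' s, x s =
      ∑' s : Multiset P, (s.map f).sum * x s := by
  classical
  have hmul (r : (P × ℕ) × Multiset P) :
      f r.1.1 * x (Multiset.replicate (r.1.2 + 1) r.1.1) * x r.2 =
        f r.1.1 * x (Multiset.replicate (r.1.2 + 1) r.1.1 + r.2) := by
    rw [hx, mul_assoc]
  have hprod := summable_mul_of_summable_norm hf hsum
  simp only [hmul] at hprod
  rw [tsum_mul_tsum_of_summable_norm hf hsum, tsum_congr hmul,
    tsum_replicate_add (F := fun q s ↦ f q.1 * x s) hprod]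
  refine tsum_congr fun s ↦ ?_
  rw [← ((hasSum_ite_lt_count f s).mul_right (x s)).tsum_eq]
  exact tsum_congr fun q ↦ by rw [ite_mul, zero_mul]

end MultisetSeries

section LogDerivativeSigns

open Filter Topology ComplexOrder

theorem iteratedDeriv_alternating_of_deriv_eq {H : ℂ → ℂ} {a : ℕ → ℂ} (ha : 0 ≤ a)
    (hH : DifferentiableOn ℂ H {s | 0 < s.re}) (habs : LSeries.abscissaOfAbsConv a ≤ 1)
    (hder : ∀ s : ℂ, 1 < s.re → deriv H s = -(LSeries a s * H s)) {x : ℝ} (hx : 1 < x)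
    (hHx : H x ≠ 0) (n : ℕ) : 0 ≤ (-1) ^ n * (iteratedDeriv n H x / H x) := by
  have hlt : LSeries.abscissaOfAbsConv a < x := habs.trans_lt (by exact_mod_cast hx)
  have hHan : AnalyticAt ℂ H x :=
    hH.analyticAt ((Complex.isOpen_re_gt 0).mem_nhds (zero_lt_one.trans hx))
  have hLan : AnalyticAt ℂ (LSeries a) x := LSeries_analyticOnNhd a x (by simpa using hlt)
  have hderiv : deriv H =ᶠ[𝓝 (x : ℂ)] fun s ↦ -(LSeries a * H) s := by
    filter_upwards [(Complex.isOpen_re_gt 1).mem_nhds hx] with s hs using hder s hs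
  induction n using Nat.strong_induction_on with
  | _ n ih =>
  rcases n with _ | n
  · simp [hHx]
  have hleibniz : (-1 : ℂ) ^ (n + 1) * (iteratedDeriv (n + 1) H x / H x) =
      ∑ i ∈ Finset.range (n + 1), (n.choose i : ℂ) * (((-1) ^ i * iteratedDeriv i (LSeries a) x) *
        ((-1) ^ (n - i) * (iteratedDeriv (n - i) H x / H x))) := by
    rw [iteratedDeriv_succ', hderiv.iteratedDeriv_eq, iteratedDeriv_fun_neg,
      iteratedDeriv_mul hLan.contDiffAt hHan.contDiffAt, neg_div, mul_neg, pow_succ, mul_neg_one,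
      neg_mul, neg_neg, Finset.sum_div, Finset.mul_sum]
    refine Finset.sum_congr rfl fun i hi ↦ ?_
    rw [← Nat.add_sub_of_le (Nat.lt_succ_iff.mp (Finset.mem_range.mp hi)), pow_add,
      Nat.add_sub_cancel_left]
    ring
  rw [hleibniz]
  exact Finset.sum_nonneg fun i _ ↦ mul_nonneg (by exact_mod_cast Nat.zero_le _) (mul_nonneg
    (LSeries.iteratedDeriv_alternating ha hlt i) (ih _ (by omega)))

-- All Taylor coefficients of `H (-z) / H x` at `-x` are nonnegative.
theorem one_le_div_of_deriv_eq_neg_lSeries_mul {H : ℂ → ℂ} {a : ℕ → ℂ} (ha : 0 ≤ a)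
    (hH : DifferentiableOn ℂ H {s | 0 < s.re}) (habs : LSeries.abscissaOfAbsConv a ≤ 1)
    (hder : ∀ s : ℂ, 1 < s.re → deriv H s = -(LSeries a s * H s)) {x y : ℝ} (hx : 1 < x)
    (hHx : H x ≠ 0) (hy : 0 < y) (hyx : y ≤ x) : 1 ≤ H y / H x := by
  set K : ℂ → ℂ := fun z ↦ H (-z) / H x - 1 with hK
  have hball : DifferentiableOn ℂ K (Metric.ball (-x : ℂ) x) := by
    refine DifferentiableOn.sub_const (DifferentiableOn.div_const (hH.comp
      differentiable_neg.differentiableOn fun z hz ↦ ?_) _) _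
    have hre : |(z - (-x : ℂ)).re| < x := (Complex.abs_re_le_norm _).trans_lt (by
      simpa [dist_eq_norm] using hz)
    rw [sub_neg_eq_add, Complex.add_re, Complex.ofReal_re, abs_lt] at hre
    rw [Set.mem_ofPred_eq, Complex.neg_re]
    linarith
  have hcoeff (n : ℕ) : 0 ≤ iteratedDeriv n K (-x : ℂ) := by
    rcases n with _ | n
    · simp [hK, hHx]
    · have hK' : deriv K = deriv fun z ↦ H (-z) / H x := funext fun z ↦ deriv_sub_const _
      convert iteratedDeriv_alternating_of_deriv_eq ha hH habs hder hx hHx (n + 1) using 1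
      rw [iteratedDeriv_succ', hK', ← iteratedDeriv_succ', iteratedDeriv_div_const,
        iteratedDeriv_comp_neg, neg_neg, smul_eq_mul, mul_div_assoc]
  have hmem : (-y : ℂ) ∈ Metric.ball (-x : ℂ) x := by
    rw [Metric.mem_ball, Complex.dist_eq, show (-y : ℂ) - -x = ((x - y : ℝ) : ℂ) by push_cast; ring,
      Complex.norm_of_nonneg (by linarith)]
    linarith
  have := hball.nonneg_of_iteratedDeriv_nonneg hcoeff (by exact_mod_cast neg_le_neg hyx) hmem
  simpa [hK] using this

end LogDerivativeSigns

section IndexedDirichletSeriesDeriv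

open Filter Topology ComplexOrder

variable {ι : Type*} {ν : ι → ℕ} (hν : ∀ i, 1 ≤ ν i) {w : ι → ℂ}

theorem fiberSum_ofReal_nonneg (ν : ι → ℕ) {w : ι → ℝ} (hw : ∀ i, 0 ≤ w i) :
    0 ≤ fiberSum ν fun i ↦ (w i : ℂ) := fun n ↦ by
  rw [fiberSum, ← Complex.ofReal_tsum]
  exact Complex.zero_le_real.mpr (tsum_nonneg fun _ ↦ hw _)

include hν

theorem abscissaOfAbsConv_fiberSum_le
    (hs : ∀ σ : ℝ, 1 < σ → Summable fun i ↦ ‖w i‖ * (ν i : ℝ) ^ (-σ)) :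
    LSeries.abscissaOfAbsConv (fiberSum ν w) ≤ 1 := by
  refine LSeries.abscissaOfAbsConv_le_of_forall_lt_LSeriesSummable (x := 1) fun y hy ↦ ?_
  exact (lSeriesHasSum_fiberSum hν (s := y) (by simpa using hs y hy)).LSeriesSummable

theorem hasDerivAt_tsum_cpow_neg (hw : ∀ i, ‖w i‖ ≤ 1)
    (hs : ∀ σ : ℝ, 1 < σ → Summable fun i ↦ (ν i : ℝ) ^ (-σ)) {s : ℂ} (h1 : 1 < s.re) :
    HasDerivAt (fun z : ℂ ↦ ∑' i, w i * (ν i : ℂ) ^ (-z))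
      (-∑' i, (Real.log (ν i) * w i) * (ν i : ℂ) ^ (-s)) s := by
  have hsum (σ : ℝ) (hσ : 1 < σ) : Summable fun i ↦ ‖w i‖ * (ν i : ℝ) ^ (-σ) :=
    (hs σ hσ).of_nonneg_of_le (fun i ↦ by positivity)
      fun i ↦ mul_le_of_le_one_left (by positivity) (hw i)
  have hlog_sum : Summable fun i ↦ ‖(Real.log (ν i) : ℂ) * w i‖ * (ν i : ℝ) ^ (-s.re) := by
    refine (summable_log_mul_rpow_neg hν hs h1).of_nonneg_of_le (fun i ↦ by positivity)
      fun i ↦ ?_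
    have hlog : 0 ≤ Real.log (ν i) := Real.log_natCast_nonneg _
    rw [norm_mul, Complex.norm_of_nonneg hlog]
    gcongr
    exact mul_le_of_le_one_right hlog (hw i)
  have h := LSeries_hasDerivAt ((abscissaOfAbsConv_fiberSum_le hν hsum).trans_lt
    (by exact_mod_cast h1 : (1 : EReal) < s.re))
  rw [← fiberSum_log_mul, (lSeriesHasSum_fiberSum hν hlog_sum).LSeries_eq] at h
  refine h.congr_of_eventuallyEq ?_
  filter_upwards [(Complex.isOpen_re_gt 1).mem_nhds h1] with z hz
  exact (lSeriesHasSum_fiberSum hν (hsum _ hz)).LSeries_eq.symm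

theorem tendsto_tsum_cpow_neg_atTop
    (hs : ∀ σ : ℝ, 1 < σ → Summable fun i ↦ ‖w i‖ * (ν i : ℝ) ^ (-σ)) :
    Tendsto (fun x : ℝ ↦ ∑' i, w i * (ν i : ℂ) ^ (-x : ℂ)) atTop (𝓝 (fiberSum ν w 1)) := by
  refine (LSeries.tendsto_atTop ((abscissaOfAbsConv_fiberSum_le hν hs).trans_lt
    (by exact EReal.coe_lt_top 1))).congr' ?_
  filter_upwards [eventually_gt_atTop 1] with x hx
  exact (lSeriesHasSum_fiberSum hν (hs _ hx)).LSeries_eq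

end IndexedDirichletSeriesDeriv

/-- A system of generalized primes in the sense of Beurling, indexed by `P`, with norms in `ℕ` and
with classes in `G`. The integers of the system are the multisets of primes. -/
structure PrimeSystem (P G : Type*) where
  norm : P → ℕ
  cls : P → G
  two_le_norm (p : P) : 2 ≤ norm p

namespace PrimeSystem

open Real Filter Topology

variable {P G : Type*}

section Norm

variable (A : PrimeSystem P G)

/-- The norm of an integer of the system, the product of the norms of its prime factors. -/
def intNorm (s : Multiset P) : ℕ := (s.map A.norm).prod

/-- The prime powers of the system: `q = (p, k)` stands for `p ^ (k + 1)`, and this is its norm. -/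
def primePow (q : P × ℕ) : ℕ := A.norm q.1 ^ (q.2 + 1)

/-- The zeta series of the system converges absolutely to the right of `1`. -/
def ZetaSummable : Prop := ∀ σ : ℝ, 1 < σ → Summable fun s ↦ (A.intNorm s : ℝ) ^ (-σ)

theorem intNorm_add (s t : Multiset P) : A.intNorm (s + t) = A.intNorm s * A.intNorm t := by
  simp [intNorm]

theorem intNorm_replicate (n : ℕ) (p : P) :
    A.intNorm (Multiset.replicate n p) = A.norm p ^ n := by
  simp [intNorm]

theorem one_le_intNorm (s : Multiset P) : 1 ≤ A.intNorm s := by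
  refine Multiset.one_le_prod_of_one_le fun n hn ↦ ?_
  obtain ⟨p, _, rfl⟩ := Multiset.mem_map.mp hn
  exact one_le_two.trans (A.two_le_norm p)

theorem intNorm_eq_one_iff {s : Multiset P} : A.intNorm s = 1 ↔ s = 0 := by
  refine ⟨fun h ↦ ?_, fun h ↦ by simp [h, intNorm]⟩
  by_contra hs
  obtain ⟨p, hp⟩ := Multiset.exists_mem_of_ne_zero hs
  obtain ⟨t, rfl⟩ := Multiset.exists_cons_of_mem hp
  rw [intNorm, Multiset.map_cons, Multiset.prod_cons] at h
  have := Nat.eq_one_of_mul_eq_one_right h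
  have := A.two_le_norm p
  omega

theorem norm_pos (p : P) : 0 < A.norm p := two_pos.trans_le (A.two_le_norm p)

theorem log_norm_nonneg (p : P) : 0 ≤ log (A.norm p) := log_natCast_nonneg _

theorem one_le_primePow (q : P × ℕ) : 1 ≤ A.primePow q := Nat.one_le_pow _ _ (A.norm_pos q.1)

theorem sum_map_log_norm (s : Multiset P) :
    (s.map fun p ↦ (log (A.norm p) : ℂ)).sum = (log (A.intNorm s) : ℂ) := by
  induction s using Multiset.induction_on with
  | empty => simp [intNorm]
  | cons p s ih =>
    have hp : (A.norm p : ℝ) ≠ 0 := Nat.cast_ne_zero.mpr (A.norm_pos p).ne'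
    have hs : (A.intNorm s : ℝ) ≠ 0 := by
      have := A.one_le_intNorm s
      positivity
    rw [Multiset.map_cons, Multiset.sum_cons, ih, ← Complex.ofReal_add, ← log_mul hp hs]
    simp [intNorm]

theorem replicate_succ_injective :
    Function.Injective fun q : P × ℕ ↦ Multiset.replicate (q.2 + 1) q.1 := by
  rintro ⟨p, k⟩ ⟨p', k'⟩ h
  have hcard := congrArg Multiset.card h
  have hmem : p ∈ Multiset.replicate (k' + 1) p' := by
    rw [← show Multiset.replicate (k + 1) p = Multiset.replicate (k' + 1) p' from h]
    simp
  simp only [Multiset.card_replicate, Nat.add_right_cancel_iff] at hcard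
  rw [hcard, Multiset.eq_of_mem_replicate hmem]

end Norm

section Summability

variable {A : PrimeSystem P G} (hA : A.ZetaSummable) {σ : ℝ} (hσ : 1 < σ)

include hA hσ

theorem ZetaSummable.summable_primePow : Summable fun q ↦ (A.primePow q : ℝ) ^ (-σ) := by
  refine ((hA σ hσ).comp_injective replicate_succ_injective).congr fun q ↦ ?_
  rw [Function.comp_apply, intNorm_replicate, primePow]

theorem ZetaSummable.summable_log_mul_primePow :
    Summable fun q ↦ log (A.norm q.1) * (A.primePow q : ℝ) ^ (-σ) := by
  refine (summable_log_mul_rpow_neg A.one_le_primePow (fun σ ↦ hA.summable_primePow)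
    hσ).of_nonneg_of_le (fun q ↦ ?_) (fun q ↦ ?_)
  · exact mul_nonneg (A.log_norm_nonneg _) (by positivity)
  · gcongr
    · exact_mod_cast A.norm_pos _
    · exact Nat.le_self_pow (by omega) _

theorem ZetaSummable.summable_log_mul_norm :
    Summable fun p ↦ log (A.norm p) * (A.norm p : ℝ) ^ (-σ) := by
  refine ((hA.summable_log_mul_primePow hσ).comp_injective
    (Prod.mk_left_injective 0)).congr fun p ↦ ?_
  simp [primePow]

end Summability

section LSeries

variable [AddCommGroup G] (A : PrimeSystem P G)

/-- The class of an integer of the system. -/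
def intClass (s : Multiset P) : G := (s.map A.cls).sum

/-- The `L`-series `L(s, ψ) = ∑ₐ ψ(a) N(a) ^ (-s)` of a character `ψ` of the class group. -/
noncomputable def lSeries (ψ : AddChar G ℂ) (s : ℂ) : ℂ :=
  ∑' a, ψ (A.intClass a) * (A.intNorm a : ℂ) ^ (-s)

/-- The negative logarithmic derivative `-L'(s, ψ) / L(s, ψ)`, as a series over prime powers. -/
noncomputable def logDeriv (ψ : AddChar G ℂ) (s : ℂ) : ℂ :=
  ∑' q, (log (A.norm q.1) * ψ ((q.2 + 1) • A.cls q.1)) * (A.primePow q : ℂ) ^ (-s)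

variable {A} [Finite G] (hA : A.ZetaSummable) (ψ : AddChar G ℂ)

include hA

theorem ZetaSummable.summable_logDeriv {s : ℂ} (hs : 1 < s.re) :
    Summable fun q ↦
      ‖(log (A.norm q.1) * ψ ((q.2 + 1) • A.cls q.1)) * (A.primePow q : ℂ) ^ (-s)‖ := by
  refine (hA.summable_log_mul_primePow hs).congr fun q ↦ ?_
  rw [norm_mul, norm_mul, AddChar.norm_apply, mul_one, Complex.norm_of_nonneg (A.log_norm_nonneg _),
    Complex.norm_natCast_cpow_of_pos (A.one_le_primePow q), Complex.neg_re]

theorem ZetaSummable.logDeriv_mul_lSeries {s : ℂ} (hs : 1 < s.re) :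
    A.logDeriv ψ s * A.lSeries ψ s =
      ∑' a, (log (A.intNorm a) * ψ (A.intClass a)) * (A.intNorm a : ℂ) ^ (-s) := by
  set x : Multiset P → ℂ := fun a ↦ ψ (A.intClass a) * (A.intNorm a : ℂ) ^ (-s) with hx
  have hmul (a b : Multiset P) : x (a + b) = x a * x b := by
    simp only [hx, intClass]
    rw [Multiset.map_add, Multiset.sum_add, AddChar.map_add_eq_mul, intNorm_add, Nat.cast_mul,
      Complex.natCast_mul_natCast_cpow]
    ring
  have hnorm : Summable fun a ↦ ‖x a‖ := by
    refine (hA _ hs).congr fun a ↦ ?_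
    rw [norm_mul, AddChar.norm_apply, one_mul,
      Complex.norm_natCast_cpow_of_pos (A.one_le_intNorm a), Complex.neg_re]
  have hterm (q : P × ℕ) : (log (A.norm q.1) * ψ ((q.2 + 1) • A.cls q.1)) *
      (A.primePow q : ℂ) ^ (-s) =
        (log (A.norm q.1) : ℂ) * x (Multiset.replicate (q.2 + 1) q.1) := by
    simp only [hx]
    rw [intNorm_replicate, intClass, Multiset.map_replicate, Multiset.sum_replicate, mul_assoc,
      primePow]
  have hlog := hA.summable_logDeriv ψ hs
  simp only [hterm] at hlog
  rw [logDeriv, tsum_congr hterm]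
  refine (tsum_primePow_mul_tsum_multiset (f := fun p ↦ (log (A.norm p) : ℂ))
    hmul hnorm hlog).trans (tsum_congr fun a ↦ ?_)
  rw [A.sum_map_log_norm, mul_assoc]

theorem ZetaSummable.hasDerivAt_lSeries {s : ℂ} (hs : 1 < s.re) :
    HasDerivAt (A.lSeries ψ) (-(A.logDeriv ψ s * A.lSeries ψ s)) s := by
  rw [hA.logDeriv_mul_lSeries ψ hs]
  exact hasDerivAt_tsum_cpow_neg A.one_le_intNorm (fun a ↦ (AddChar.norm_apply ψ _).le) hA hs

theorem ZetaSummable.tendsto_lSeries_atTop :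
    Tendsto (fun x : ℝ ↦ A.lSeries ψ x) atTop (𝓝 1) := by
  have hone : fiberSum A.intNorm (fun a ↦ ψ (A.intClass a)) 1 = 1 := by
    rw [fiberSum, tsum_eq_single ⟨0, by simp [intNorm]⟩]
    · simp [intClass]
    · rintro ⟨a, ha⟩ hne
      exact absurd (Subtype.ext (A.intNorm_eq_one_iff.mp ha)) hne
  rw [← hone]
  exact tendsto_tsum_cpow_neg_atTop A.one_le_intNorm fun σ hσ ↦ (hA σ hσ).congr fun a ↦ by
    rw [AddChar.norm_apply, one_mul]

theorem ZetaSummable.hasDerivAt_prod_lSeries (T : Finset (AddChar G ℂ)) {s : ℂ} (hs : 1 < s.re) :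
    HasDerivAt (fun z ↦ ∏ ψ ∈ T, A.lSeries ψ z)
      (-((∑ ψ ∈ T, A.logDeriv ψ s) * ∏ ψ ∈ T, A.lSeries ψ s)) s := by
  classical
  induction T using Finset.induction_on with
  | empty => simpa using hasDerivAt_const s (1 : ℂ)
  | insert ψ T hψ ih =>
    simp only [Finset.prod_insert hψ, Finset.sum_insert hψ]
    exact ((hA.hasDerivAt_lSeries ψ hs).mul ih).congr_deriv (by ring)

end LSeries

end PrimeSystem

section PoleAtOne

open Filter Topology

theorem tendsto_ofReal_nhdsGT (x : ℝ) : Tendsto (fun y : ℝ ↦ (y : ℂ)) (𝓝[>] x) (𝓝 x) :=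
  tendsto_nhdsWithin_of_tendsto_nhds (Complex.continuous_ofReal.tendsto x)

theorem tendsto_sub_mul_deriv_div {Z : ℂ → ℂ} {x : ℝ} (hZ : AnalyticAt ℂ Z x) (hx : Z x ≠ 0) :
    Tendsto (fun y : ℝ ↦ (y - x : ℂ) * (deriv Z y / Z y)) (𝓝[>] x) (𝓝 0) := by
  have hcont : ContinuousAt (fun s : ℂ ↦ (s - x) * (deriv Z s / Z s)) x :=
    (by fun_prop : ContinuousAt (fun s : ℂ ↦ s - x) x).mul
      (hZ.deriv.continuousAt.div hZ.continuousAt hx)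
  simpa only [Function.comp_def, sub_self, zero_mul] using
    hcont.tendsto.comp (tendsto_ofReal_nhdsGT x)

end PoleAtOne

namespace PrimeSystem

open Real Filter Topology

variable {P G : Type*}

section PrimeSums

variable {A : PrimeSystem P G}

theorem log_div_primePow_succ_le (p : P) (k : ℕ) :
    log (A.norm p) / A.primePow (p, k + 1) ≤
      log (A.norm p) * (A.norm p : ℝ) ^ (-2 : ℝ) * (1 / 2) ^ k := by
  have hnorm : (2 : ℝ) ≤ A.norm p := by exact_mod_cast A.two_le_norm p
  calc log (A.norm p) / A.primePow (p, k + 1)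
      = log (A.norm p) * (((A.norm p : ℝ) ^ 2)⁻¹ * ((A.norm p : ℝ) ^ k)⁻¹) := by
        rw [primePow, ← mul_inv, ← pow_add, div_eq_mul_inv]
        push_cast
        ring
    _ ≤ log (A.norm p) * (((A.norm p : ℝ) ^ 2)⁻¹ * ((2 : ℝ) ^ k)⁻¹) := by
        have := A.log_norm_nonneg p
        gcongr
    _ = _ := by
        rw [rpow_neg (Nat.cast_nonneg _), rpow_two, one_div, inv_pow, mul_assoc]

theorem ZetaSummable.summable_indicator_log_div_primePow (hA : A.ZetaSummable) {S : Set (P × ℕ)}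
    (hS : Summable fun p ↦ S.indicator (fun q ↦ log (A.norm q.1) / A.primePow q) (p, 0)) :
    Summable (S.indicator fun q ↦ log (A.norm q.1) / A.primePow q) := by
  set f := S.indicator fun q ↦ log (A.norm q.1) / A.primePow q
  have hterm (q : P × ℕ) : 0 ≤ log (A.norm q.1) / A.primePow q :=
    div_nonneg (A.log_norm_nonneg _) (Nat.cast_nonneg _)
  have hf (q) : 0 ≤ f q := Set.indicator_nonneg (fun q _ ↦ hterm q) q
  have hf_succ (p : P) (k : ℕ) :
      f (p, k + 1) ≤ log (A.norm p) * (A.norm p : ℝ) ^ (-2 : ℝ) * (1 / 2) ^ k :=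
    (Set.indicator_le_self' (fun q _ ↦ hterm q) _).trans (log_div_primePow_succ_le p k)
  have hgeo : Summable fun q : P × ℕ ↦
      log (A.norm q.1) * (A.norm q.1 : ℝ) ^ (-2 : ℝ) * (1 / 2) ^ q.2 :=
    (hA.summable_log_mul_norm one_lt_two).mul_of_nonneg summable_geometric_two
      (fun p ↦ mul_nonneg (A.log_norm_nonneg p) (by positivity)) fun k ↦ by positivity
  have htail : Summable fun q : P × ℕ ↦ f (q.1, q.2 + 1) :=
    hgeo.of_nonneg_of_le (fun q ↦ hf _) fun q ↦ hf_succ q.1 q.2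
  have hrow (p : P) : Summable fun k ↦ f (p, k) := by
    rw [← summable_nat_add_iff 1]
    exact htail.prod_factor p
  refine (summable_prod_of_nonneg hf).mpr ⟨hrow, (hS.add htail.prod).congr fun p ↦ ?_⟩
  exact (hrow p).tsum_eq_zero_add.symm

theorem ZetaSummable.tendsto_sub_one_mul_tsum_primePow (hA : A.ZetaSummable) {S : Set (P × ℕ)}
    (hS : Summable fun p ↦ S.indicator (fun q ↦ log (A.norm q.1) / A.primePow q) (p, 0)) (c : ℂ) :
    Tendsto (fun x : ℝ ↦ (x - 1 : ℂ) * ∑' q, S.indicator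
      (fun q ↦ (c * log (A.norm q.1)) * (A.primePow q : ℂ) ^ (-x : ℂ)) q) (𝓝[>] 1) (𝓝 0) := by
  have hsum := (hA.summable_indicator_log_div_primePow hS).mul_left ‖c‖
  set B := ∑' q, ‖c‖ * S.indicator (fun q ↦ log (A.norm q.1) / A.primePow q) q
  have hlim : Tendsto (fun x : ℝ ↦ ‖(x - 1 : ℂ)‖ * B) (𝓝[>] 1) (𝓝 0) := by
    have hcont : Continuous fun x : ℝ ↦ ‖(x - 1 : ℂ)‖ * B := by fun_prop
    exact tendsto_nhdsWithin_of_tendsto_nhds (by simpa using hcont.tendsto 1)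
  refine squeeze_zero_norm' ?_ hlim
  filter_upwards [self_mem_nhdsWithin] with x hx
  rw [norm_mul]
  refine mul_le_mul_of_nonneg_left (tsum_of_norm_bounded hsum.hasSum fun q ↦ ?_) (norm_nonneg _)
  by_cases hq : q ∈ S
  · have hpow : (1 : ℝ) ≤ A.primePow q := by exact_mod_cast A.one_le_primePow q
    rw [Set.indicator_of_mem hq, Set.indicator_of_mem hq, norm_mul, norm_mul,
      Complex.norm_of_nonneg (A.log_norm_nonneg _), mul_assoc, div_eq_mul_inv, ← rpow_neg_one,
      Complex.norm_natCast_cpow_of_pos (A.one_le_primePow q), Complex.neg_re, Complex.ofReal_re]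
    have := A.log_norm_nonneg q.1
    gcongr
    exact le_of_lt hx
  · simp [hq]

end PrimeSums

section Continuation

variable [AddCommGroup G]

/-- `Z ψ` continues the `L`-series of `ψ` to the right half plane, after removal of the simple pole
of the trivial character at `1`. -/
structure IsContinuation (A : PrimeSystem P G) (Z : AddChar G ℂ → ℂ → ℂ) : Prop where
  differentiableOn : ∀ ψ, DifferentiableOn ℂ (Z ψ) {s | 0 < s.re}
  eq_of_ne : ∀ ψ, ψ ≠ 0 → ∀ s : ℂ, 1 < s.re → Z ψ s = A.lSeries ψ s
  eq_zero : ∀ s : ℂ, 1 < s.re → Z 0 s = (s - 1) * A.lSeries 0 s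
  ne_zero : Z 0 1 ≠ 0

variable {A : PrimeSystem P G} {Z : AddChar G ℂ → ℂ → ℂ}

theorem IsContinuation.analyticAt (hZ : A.IsContinuation Z) (ψ : AddChar G ℂ) {s : ℂ}
    (hs : 0 < s.re) : AnalyticAt ℂ (Z ψ) s :=
  (hZ.differentiableOn ψ).analyticAt ((Complex.isOpen_re_gt 0).mem_nhds hs)

theorem IsContinuation.eventually_ne_zero (hZ : A.IsContinuation Z) {ψ : AddChar G ℂ}
    (h : Z ψ 1 ≠ 0) : ∀ᶠ x : ℝ in 𝓝[>] 1, Z ψ x ≠ 0 :=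
  (tendsto_ofReal_nhdsGT 1).eventually (by
    simpa using (hZ.analyticAt ψ (s := 1) (by simp)).continuousAt.eventually_ne h)

variable [Finite G]

theorem IsContinuation.tendsto_logDeriv_of_ne_zero (hZ : A.IsContinuation Z) (hA : A.ZetaSummable)
    {ψ : AddChar G ℂ} (hψ : ψ ≠ 0) (h : Z ψ 1 ≠ 0) :
    Tendsto (fun x : ℝ ↦ (x - 1 : ℂ) * A.logDeriv ψ x) (𝓝[>] 1) (𝓝 0) := by
  have hlim := tendsto_sub_mul_deriv_div (x := 1)
    (by simpa using hZ.analyticAt ψ (s := 1) (by simp)) (by simpa using h)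
  rw [← neg_zero]
  refine hlim.neg.congr' ?_
  filter_upwards [hZ.eventually_ne_zero h, self_mem_nhdsWithin] with x hx (hx1 : 1 < (x : ℂ).re)
  have hderiv : HasDerivAt (Z ψ) _ (x : ℂ) :=
    (hA.hasDerivAt_lSeries ψ hx1).congr_of_eventuallyEq (by
      filter_upwards [(Complex.isOpen_re_gt 1).mem_nhds hx1] with z hz using hZ.eq_of_ne ψ hψ z hz)
  rw [hderiv.deriv, ← hZ.eq_of_ne ψ hψ _ hx1, Complex.ofReal_one]
  field_simp

theorem IsContinuation.tendsto_logDeriv_zero (hZ : A.IsContinuation Z) (hA : A.ZetaSummable) :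
    Tendsto (fun x : ℝ ↦ (x - 1 : ℂ) * A.logDeriv 0 x) (𝓝[>] 1) (𝓝 1) := by
  have hlim := tendsto_sub_mul_deriv_div (x := 1)
    (by simpa using hZ.analyticAt 0 (s := 1) (by simp)) (by simpa using hZ.ne_zero)
  rw [← sub_zero (1 : ℂ)]
  refine (hlim.const_sub 1).congr' ?_
  filter_upwards [hZ.eventually_ne_zero hZ.ne_zero, self_mem_nhdsWithin] with
    x hx (hx1 : 1 < (x : ℂ).re)
  have hderiv : HasDerivAt (Z 0) _ (x : ℂ) :=
    (((hasDerivAt_id (x : ℂ)).sub_const 1).mul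
      (hA.hasDerivAt_lSeries 0 hx1)).congr_of_eventuallyEq (by
      filter_upwards [(Complex.isOpen_re_gt 1).mem_nhds hx1] with z hz using hZ.eq_zero z hz)
  rw [hZ.eq_zero _ hx1] at hx
  have hx_sub := left_ne_zero_of_mul hx
  have hx_lSeries := right_ne_zero_of_mul hx
  rw [hderiv.deriv, hZ.eq_zero _ hx1, id, Complex.ofReal_one]
  field_simp
  ring

-- The zero of `Z ψ` cancels the pole of the trivial character.
theorem IsContinuation.exists_differentiableOn_prod_lSeries (hZ : A.IsContinuation Z)
    {ψ : AddChar G ℂ} (hψ : ψ ≠ 0) (h : Z ψ 1 = 0) :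
    ∃ F : ℂ → ℂ, DifferentiableOn ℂ F {s | 0 < s.re} ∧
      ∀ s : ℂ, 1 < s.re → F s = ∏ χ : AddChar G ℂ, A.lSeries χ s := by
  classical
  have hmem : {s : ℂ | 0 < s.re} ∈ 𝓝 (1 : ℂ) := (Complex.isOpen_re_gt 0).mem_nhds (by simp)
  refine ⟨fun s ↦ Z 0 s * (dslope (Z ψ) 1 s *
    ∏ χ ∈ (Finset.univ.erase (0 : AddChar G ℂ)).erase ψ, Z χ s), ?_, fun s hs ↦ ?_⟩
  · exact (hZ.differentiableOn 0).mul (((Complex.differentiableOn_dslope hmem).mpr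
      (hZ.differentiableOn ψ)).mul
        (DifferentiableOn.fun_finsetProd fun χ _ ↦ hZ.differentiableOn χ))
  · have hs1 : s ≠ 1 := by
      rintro rfl
      simp at hs
    have hs1' := sub_ne_zero.mpr hs1
    beta_reduce
    rw [← Finset.mul_prod_erase Finset.univ _ (Finset.mem_univ (0 : AddChar G ℂ)),
      ← Finset.mul_prod_erase (Finset.univ.erase (0 : AddChar G ℂ)) _
        (Finset.mem_erase.mpr ⟨hψ, Finset.mem_univ _⟩), dslope_of_ne _ hs1, slope_def_field, h,
      hZ.eq_zero s hs, hZ.eq_of_ne ψ hψ s hs,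
      Finset.prod_congr rfl fun χ hχ ↦ hZ.eq_of_ne χ
        (Finset.ne_of_mem_erase (Finset.mem_of_mem_erase hχ)) s hs]
    field_simp
    ring

end Continuation

end PrimeSystem

section PowerSums

variable {ι : Type*} (T : Finset ι) (ν : ι → ℕ)

theorem sum_natCast_cpow_neg_ofReal (x : ℝ) :
    ∑ i ∈ T, (ν i : ℂ) ^ (-x : ℂ) = (∑ i ∈ T, (ν i : ℝ) ^ (-x) : ℝ) := by
  rw [Complex.ofReal_sum]
  refine Finset.sum_congr rfl fun i _ ↦ ?_
  rw [Complex.ofReal_cpow (Nat.cast_nonneg _), Complex.ofReal_neg, Complex.ofReal_natCast]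

theorem hasDerivAt_sum_natCast_cpow_neg {ν : ι → ℕ} (hν : ∀ i, ν i ≠ 0) (s : ℂ) :
    HasDerivAt (fun s : ℂ ↦ ∑ i ∈ T, (ν i : ℂ) ^ (-s))
      (-∑ i ∈ T, (Real.log (ν i) : ℂ) * (ν i : ℂ) ^ (-s)) s := by
  rw [← Finset.sum_neg_distrib]
  refine HasDerivAt.fun_sum fun i _ ↦ ?_
  refine ((hasDerivAt_neg s).const_cpow (.inl (Nat.cast_ne_zero.mpr (hν i)))).congr_deriv ?_
  rw [Complex.ofReal_log (Nat.cast_nonneg _), Complex.ofReal_natCast]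
  ring

theorem summable_log_div_of_summable_rpow {ν : ι → ℕ}
    (h : Summable fun i ↦ (ν i : ℝ) ^ (-(1 / 2) : ℝ)) : Summable fun i ↦ Real.log (ν i) / ν i := by
  refine (h.mul_left 2).of_nonneg_of_le
    (fun i ↦ div_nonneg (Real.log_natCast_nonneg _) (Nat.cast_nonneg _)) fun i ↦ ?_
  rcases (ν i).eq_zero_or_pos with h0 | h0
  · simp [h0]
  have h0' : (0 : ℝ) < ν i := Nat.cast_pos.mpr h0
  rw [div_le_iff₀ h0', mul_assoc, ← Real.rpow_add_one h0'.ne']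
  calc Real.log (ν i) ≤ (ν i : ℝ) ^ (1 / 2 : ℝ) / (1 / 2) :=
      Real.log_le_rpow_div h0'.le (by norm_num)
    _ = 2 * (ν i : ℝ) ^ (-(1 / 2) + 1 : ℝ) := by
      rw [show (-(1 / 2) + 1 : ℝ) = 1 / 2 by norm_num]
      ring

end PowerSums

namespace PrimeSystem

open Real Filter Topology ComplexOrder

variable {P G : Type*} [AddCommGroup G] {A : PrimeSystem P G} {Z : AddChar G ℂ → ℂ → ℂ}

section PowersInClasses

variable [Fintype G]

theorem ZetaSummable.hasSum_logDeriv_class (hA : A.ZetaSummable) (g : G) {s : ℂ}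
    (hs : 1 < s.re) :
    HasSum ({q : P × ℕ | (q.2 + 1) • A.cls q.1 = g}.indicator fun q ↦
      (Fintype.card G * log (A.norm q.1)) * (A.primePow q : ℂ) ^ (-s))
      (∑ ψ : AddChar G ℂ, ψ (-g) * A.logDeriv ψ s) := by
  classical
  have hsum := hasSum_sum fun ψ (_ : ψ ∈ Finset.univ) ↦
    (hA.summable_logDeriv ψ hs).of_norm.hasSum.mul_left (ψ (-g))
  refine hsum.congr_fun fun q ↦ ?_
  have horth := AddChar.sum_apply_eq_ite ((q.2 + 1) • A.cls q.1 - g)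
  rw [sub_eq_zero] at horth
  calc _ = (if (q.2 + 1) • A.cls q.1 = g then (Fintype.card G : ℂ) else 0) *
        (log (A.norm q.1) * (A.primePow q : ℂ) ^ (-s)) := by
        by_cases h : (q.2 + 1) • A.cls q.1 = g <;> simp [h, mul_assoc]
    _ = _ := by
        rw [← horth, Finset.sum_mul]
        refine Finset.sum_congr rfl fun ψ _ ↦ ?_
        rw [sub_eq_add_neg, AddChar.map_add_eq_mul]
        ring

-- The `card G`-th power of a prime lies in the trivial class, so the terms subtracted here already
-- occur in the sum over all characters.
theorem ZetaSummable.exists_lSeries_eq_sum_logDeriv_sub (hA : A.ZetaSummable) (T : Finset P) :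
    ∃ a : ℕ → ℂ, 0 ≤ a ∧ LSeries.abscissaOfAbsConv a ≤ 1 ∧ ∀ s : ℂ, 1 < s.re →
      LSeries a s = (∑ ψ : AddChar G ℂ, A.logDeriv ψ s) -
        ∑ p ∈ T, (log (A.norm p ^ Fintype.card G : ℕ) : ℂ) *
          ((A.norm p ^ Fintype.card G : ℕ) : ℂ) ^ (-s) := by
  obtain ⟨h, hh⟩ : ∃ h, Fintype.card G = h + 1 := Nat.exists_eq_add_one.mpr Fintype.card_pos
  set S : Set (P × ℕ) := {q | (q.2 + 1) • A.cls q.1 = 0}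
  set S' : Finset (P × ℕ) := T ×ˢ {h}
  have hS' : (S' : Set (P × ℕ)) ⊆ S := fun q hq ↦ by
    obtain ⟨-, hq⟩ := Finset.mem_product.mp hq
    change (q.2 + 1) • A.cls q.1 = 0
    rw [Finset.mem_singleton.mp hq, ← hh, card_nsmul_eq_zero]
  set w : P × ℕ → ℝ := (S \ S').indicator fun q ↦ Fintype.card G * log (A.norm q.1)
  have hlog (q : P × ℕ) : 0 ≤ Fintype.card G * log (A.norm q.1) :=
    mul_nonneg (Nat.cast_nonneg _) (A.log_norm_nonneg _)
  have hw (q) : 0 ≤ w q := Set.indicator_nonneg (fun q _ ↦ hlog q) q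
  have hwsum (σ : ℝ) (hσ : 1 < σ) :
      Summable fun q ↦ ‖(w q : ℂ)‖ * (A.primePow q : ℝ) ^ (-σ) := by
    refine ((hA.summable_log_mul_primePow hσ).mul_left (Fintype.card G : ℝ)).of_nonneg_of_le
      (fun q ↦ by positivity) fun q ↦ ?_
    rw [Complex.norm_of_nonneg (hw q), ← mul_assoc]
    gcongr
    exact Set.indicator_le_self' (fun q _ ↦ hlog q) q
  refine ⟨fiberSum A.primePow fun q ↦ (w q : ℂ), fiberSum_ofReal_nonneg _ hw,
    abscissaOfAbsConv_fiberSum_le A.one_le_primePow hwsum, fun s hs ↦ ?_⟩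
  rw [(lSeriesHasSum_fiberSum A.one_le_primePow (hwsum _ hs)).LSeries_eq]
  set f : P × ℕ → ℂ := fun q ↦ (Fintype.card G * log (A.norm q.1)) * (A.primePow q : ℂ) ^ (-s)
  have hS : HasSum (S.indicator f) (∑ ψ : AddChar G ℂ, A.logDeriv ψ s) := by
    simpa only [neg_zero, AddChar.map_zero_eq_one, one_mul] using hA.hasSum_logDeriv_class 0 hs
  have hsub := hS.sub (hasSum_subtype_iff_indicator.mp (Finset.hasSum S' f))
  convert hsub.tsum_eq using 1
  · refine tsum_congr fun q ↦ ?_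
    rw [← Pi.sub_apply, ← Set.indicator_sdiff hS']
    by_cases hq : q ∈ S \ S' <;> simp [w, f, hq]
  · rw [Finset.sum_product]
    simp [f, primePow, hh]

theorem ZetaSummable.sum_norm_pow_rpow_neg_le (hA : A.ZetaSummable) {F : ℂ → ℂ}
    (hF : DifferentiableOn ℂ F {s | 0 < s.re})
    (hF_eq : ∀ s : ℂ, 1 < s.re → F s = ∏ ψ : AddChar G ℂ, A.lSeries ψ s) {x y : ℝ} (hx : 1 < x)
    (hFx : F x ≠ 0) (hy : 0 < y) (hyx : y ≤ x) (T : Finset P) :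
    ∑ p ∈ T, ((A.norm p ^ Fintype.card G : ℕ) : ℝ) ^ (-y) ≤
      ‖F y‖ / ‖F x‖ * rexp (∑ p ∈ T, ((A.norm p ^ Fintype.card G : ℕ) : ℝ) ^ (-x)) := by
  obtain ⟨a, ha, habs, haL⟩ := hA.exists_lSeries_eq_sum_logDeriv_sub T
  set l : ℂ → ℂ := fun s ↦ ∑ p ∈ T, ((A.norm p ^ Fintype.card G : ℕ) : ℂ) ^ (-s)
  set r : ℝ → ℝ := fun x ↦ ∑ p ∈ T, ((A.norm p ^ Fintype.card G : ℕ) : ℝ) ^ (-x)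
  have hl (s : ℂ) : HasDerivAt l _ s :=
    hasDerivAt_sum_natCast_cpow_neg T (fun p ↦ (pow_pos (A.norm_pos p) _).ne') s
  set H : ℂ → ℂ := fun s ↦ F s * Complex.exp (-l s)
  have hH : DifferentiableOn ℂ H {s | 0 < s.re} :=
    hF.mul fun s _ ↦ (hl s).neg.cexp.differentiableAt.differentiableWithinAt
  have hderiv (s : ℂ) (hs : 1 < s.re) : deriv H s = -(LSeries a s * H s) := by
    have hFs : HasDerivAt F _ s :=
      (hA.hasDerivAt_prod_lSeries Finset.univ hs).congr_of_eventuallyEq (by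
        filter_upwards [(Complex.isOpen_re_gt 1).mem_nhds hs] with z hz using hF_eq z hz)
    have hHs : HasDerivAt H _ s := hFs.mul (hl s).neg.cexp
    rw [hHs.deriv, haL s hs, ← hF_eq s hs, Pi.neg_apply]
    ring
  have hle := one_le_div_of_deriv_eq_neg_lSeries_mul ha hH habs hderiv hx
    (mul_ne_zero hFx (Complex.exp_ne_zero _)) hy hyx
  have hnorm (z : ℝ) : ‖H z‖ = ‖F z‖ * rexp (-r z) := by
    rw [norm_mul, Complex.norm_exp, Complex.neg_re]
    congr 3
    exact congrArg Complex.re (sum_natCast_cpow_neg_ofReal T _ z)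
  have hquot : 1 ≤ ‖H y‖ / ‖H x‖ := by
    rw [← norm_div]
    exact (Complex.le_def.mp hle).1.trans (Complex.re_le_norm _)
  have hexp : rexp (r y) ≤ ‖F y‖ / ‖F x‖ * rexp (r x) := by
    calc rexp (r y) ≤ rexp (r y) * (‖H y‖ / ‖H x‖) := le_mul_of_one_le_right (exp_pos _).le hquot
      _ = _ := by
        rw [hnorm, hnorm, exp_neg, exp_neg]
        field_simp
  linarith [add_one_le_exp (r y)]

end PowersInClasses

section PrimesInClasses

variable [Finite G]

-- A zero of one `L`-function at `1` would cancel the pole of the principal one, so that the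
-- product of all of them would extend to `0 < re s`. The sums bounded above would then remain
-- bounded down to the exponent `1 / 2`, which leaves too few primes for the principal
-- `L`-function to have its pole.
theorem IsContinuation.apply_one_ne_zero (hZ : A.IsContinuation Z) (hA : A.ZetaSummable)
    {ψ : AddChar G ℂ} (hψ : ψ ≠ 0) : Z ψ 1 ≠ 0 := by
  cases nonempty_fintype G
  intro hzero
  obtain ⟨F, hF, hF_eq⟩ := hZ.exists_differentiableOn_prod_lSeries hψ hzero
  set h := Fintype.card G with hh
  have hpos : 0 < h := Fintype.card_pos
  have hpow (z : ℝ) (p : P) : ((A.norm p ^ h : ℕ) : ℝ) ^ (-z) = (A.norm p : ℝ) ^ (-(h * z)) := by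
    rw [Nat.cast_pow, ← rpow_natCast, ← rpow_mul (Nat.cast_nonneg _), mul_neg]
  obtain ⟨x, hx, hLx⟩ : ∃ x : ℝ, 1 < x ∧ ∀ ψ : AddChar G ℂ, A.lSeries ψ x ≠ 0 :=
    ((eventually_gt_atTop 1).and (eventually_all.mpr fun ψ ↦
      (hA.tendsto_lSeries_atTop ψ).eventually_ne one_ne_zero)).exists
  have hFx : F x ≠ 0 := by
    rw [hF_eq x hx]
    exact Finset.prod_ne_zero_iff.mpr fun ψ _ ↦ hLx ψ
  have hsum_x : Summable fun p ↦ ((A.norm p ^ h : ℕ) : ℝ) ^ (-x) := by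
    refine ((hA.summable_primePow hx).comp_injective
      (Prod.mk_left_injective (h - 1))).congr fun p ↦ ?_
    rw [Function.comp_apply, primePow, Nat.sub_add_cancel hpos]
  have hsum_half : Summable fun p ↦ (A.norm p : ℝ) ^ (-(1 / 2) : ℝ) := by
    refine summable_of_sum_le (c := ‖F (1 / (2 * h) : ℝ)‖ / ‖F x‖ *
      rexp (∑' p, ((A.norm p ^ h : ℕ) : ℝ) ^ (-x))) (fun p ↦ by positivity) fun T ↦ ?_
    have hle := hA.sum_norm_pow_rpow_neg_le hF hF_eq hx hFx (y := 1 / (2 * h)) (by positivity)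
      (le_trans (by rw [div_le_one (by positivity)]; norm_cast; omega) hx.le) T
    have hy : (h * (1 / (2 * h)) : ℝ) = 1 / 2 := by field_simp
    simp only [← hh, hpow (1 / (2 * h)), hy] at hle
    refine hle.trans (mul_le_mul_of_nonneg_left (exp_le_exp.mpr ?_) (by positivity))
    exact hsum_x.sum_le_tsum T fun p _ ↦ by positivity
  have hlim := hA.tendsto_sub_one_mul_tsum_primePow (S := Set.univ)
    (by simpa [primePow] using summable_log_div_of_summable_rpow hsum_half) 1
  refine zero_ne_one (tendsto_nhds_unique hlim ?_)
  exact (hZ.tendsto_logDeriv_zero hA).congr fun z ↦ by simp [logDeriv]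

theorem IsContinuation.not_summable_log_div (hZ : A.IsContinuation Z) (hA : A.ZetaSummable)
    (g : G) : ¬ Summable fun p : {p // A.cls p = g} ↦ log (A.norm p) / A.norm p := by
  classical
  cases nonempty_fintype G
  intro hsum
  have hS : Summable fun p ↦ {q : P × ℕ | (q.2 + 1) • A.cls q.1 = g}.indicator
      (fun q ↦ log (A.norm q.1) / A.primePow q) (p, 0) := by
    refine (summable_subtype_iff_indicator (s := {p | A.cls p = g})
      (f := fun p ↦ log (A.norm p) / A.norm p) |>.mp hsum).congr fun p ↦ ?_
    simp [Set.indicator_apply, primePow]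
  have hlim := hA.tendsto_sub_one_mul_tsum_primePow hS (Fintype.card G)
  have hlim' : Tendsto (fun x : ℝ ↦ ∑ ψ : AddChar G ℂ, ψ (-g) * ((x - 1 : ℂ) * A.logDeriv ψ x))
      (𝓝[>] 1) (𝓝 (∑ ψ : AddChar G ℂ, ψ (-g) * if ψ = 0 then 1 else 0)) := by
    refine tendsto_finsetSum _ fun ψ _ ↦ Tendsto.const_mul _ ?_
    split_ifs with h
    · exact h ▸ hZ.tendsto_logDeriv_zero hA
    · exact hZ.tendsto_logDeriv_of_ne_zero hA h (hZ.apply_one_ne_zero hA h)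
  have hone : ∑ ψ : AddChar G ℂ, (ψ (-g) * if ψ = 0 then 1 else 0) = 1 := by simp
  rw [hone] at hlim'
  refine zero_ne_one (tendsto_nhds_unique hlim (hlim'.congr' ?_))
  filter_upwards [self_mem_nhdsWithin] with x (hx : 1 < (x : ℂ).re)
  rw [(hA.hasSum_logDeriv_class g hx).tsum_eq, Finset.mul_sum]
  exact Finset.sum_congr rfl fun ψ _ ↦ mul_left_comm _ _ _

end PrimesInClasses

end PrimeSystem

section FiberwiseSums

theorem tsum_mul_eq_sum_mul_tsum_fiber {ι G : Type*} [Fintype G] (k : ι → G) (w : G → ℂ)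
    {f : ι → ℝ} (hf : Summable f) :
    ∑' i, w (k i) * f i = ∑ g, w g * ((∑' i : {i // k i = g}, f i : ℝ) : ℂ) := by
  have hsum : Summable fun i ↦ w (k i) * f i := by
    obtain ⟨B, hB⟩ := (Set.finite_range fun g ↦ ‖w g‖).bddAbove
    refine Summable.of_norm_bounded (hf.norm.mul_left B) fun i ↦ ?_
    rw [norm_mul, Complex.norm_real]
    gcongr
    exact hB ⟨k i, rfl⟩
  rw [← (Equiv.sigmaFiberEquiv k).tsum_eq fun i ↦ w (k i) * f i]
  refine ((Equiv.sigmaFiberEquiv k).summable_iff.mpr hsum).tsum_sigma.trans ?_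
  rw [tsum_fintype]
  refine Finset.sum_congr rfl fun g _ ↦ ?_
  rw [Complex.ofReal_tsum, ← tsum_mul_left]
  refine tsum_congr fun i ↦ ?_
  simp [Equiv.sigmaFiberEquiv, i.2]

end FiberwiseSums

namespace PrimeSystem

open Real

variable {P G : Type*} [AddCommGroup G]

/-- The theta series `∑ₐ exp (-N(a) t)` over the integers of the system converges, and its part over
each single class is `κ / t + O(1)` as `t → 0`, with the same `κ` for all classes. -/
structure HasThetaAsymptotics (A : PrimeSystem P G) (κ C : ℝ) : Prop where
  summable_exp {t : ℝ} (ht : 0 < t) : Summable fun a ↦ rexp (-(A.intNorm a) * t)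
  abs_tsum_sub_le (g : G) {t : ℝ} (ht : 0 < t) (ht1 : t ≤ 1) :
    |(∑' a : {a // A.intClass a = g}, rexp (-(A.intNorm a) * t)) - κ / t| ≤ C

namespace HasThetaAsymptotics

variable [Finite G] {A : PrimeSystem P G} {κ C : ℝ}

theorem zetaSummable (h : A.HasThetaAsymptotics κ C) : A.ZetaSummable := by
  intro σ hσ
  have := Fintype.ofFinite G
  refine summable_rpow_neg_of_tsum_exp_le A.one_le_intNorm (fun _ ↦ h.summable_exp)
    (C := Fintype.card G * (κ + C)) (fun t ht ht1 ↦ ?_) hσ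
  have hC : 0 ≤ C := (abs_nonneg _).trans (h.abs_tsum_sub_le 0 ht ht1)
  have hsum := tsum_mul_eq_sum_mul_tsum_fiber A.intClass 1 (h.summable_exp ht)
  simp only [Pi.one_apply, one_mul, ← Complex.ofReal_tsum, ← Complex.ofReal_sum,
    Complex.ofReal_inj] at hsum
  rw [hsum]
  refine (Finset.sum_le_card_nsmul _ _ ((κ + C) / t) fun g _ ↦ ?_).trans_eq ?_
  · have hle := (abs_le.mp (h.abs_tsum_sub_le g ht ht1)).2
    have hCt : C ≤ C / t := by
      rw [le_div_iff₀ ht]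
      exact mul_le_of_le_one_right hC ht1
    rw [add_div]
    linarith
  · rw [nsmul_eq_mul, Finset.card_univ, mul_div_assoc]

theorem norm_tsum_mul_sub_le [DecidableEq (AddChar G ℂ)] (h : A.HasThetaAsymptotics κ C)
    (ψ : AddChar G ℂ) {t : ℝ} (ht : 0 < t) (ht1 : t ≤ 1) :
    ‖(∑' a, ψ (A.intClass a) * (rexp (-(A.intNorm a) * t) : ℂ)) -
      (if ψ = 0 then (Nat.card G * κ : ℂ) else 0) / t‖ ≤ Nat.card G * C := by
  have := Fintype.ofFinite G
  have hmain : (if ψ = 0 then (Nat.card G * κ : ℂ) else 0) / t =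
      ∑ g, ψ g * ((κ / t : ℝ) : ℂ) := by
    rw [← Finset.sum_mul, AddChar.sum_eq_ite]
    split_ifs <;> simp [mul_div_assoc]
  rw [tsum_mul_eq_sum_mul_tsum_fiber A.intClass ψ (h.summable_exp ht), hmain,
    ← Finset.sum_sub_distrib]
  refine (norm_sum_le_of_le _ fun g _ ↦ ?_).trans_eq
    (by rw [Finset.sum_const, nsmul_eq_mul, Finset.card_univ, Nat.card_eq_fintype_card])
  rw [← mul_sub, norm_mul, AddChar.norm_apply, one_mul, ← Complex.ofReal_sub, Complex.norm_real,
    Real.norm_eq_abs]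
  exact h.abs_tsum_sub_le g ht ht1

theorem exists_isContinuation (h : A.HasThetaAsymptotics κ C) (hκ : 0 < κ) :
    ∃ Z : AddChar G ℂ → ℂ → ℂ, A.IsContinuation Z := by
  classical
  choose E hE hEL using fun ψ : AddChar G ℂ ↦ exists_continuation_of_tsum_exp
    (w := fun a ↦ ψ (A.intClass a)) (fun a ↦ (AddChar.norm_apply ψ _).le) (fun _ ↦ h.summable_exp)
    A.one_le_intNorm h.zetaSummable fun _ ↦ h.norm_tsum_mul_sub_le ψ
  refine ⟨fun ψ s ↦ if ψ = 0 then (s - 1) * E ψ s + Nat.card G * κ else E ψ s,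
    fun ψ ↦ ?_, fun ψ hψ s hs ↦ ?_, fun s hs ↦ ?_, ?_⟩
  · by_cases hψ : ψ = 0
    · simp only [hψ, if_true]
      exact ((differentiable_id.sub_const 1).differentiableOn.mul (hE 0)).add_const _
    · simp only [hψ, if_false]
      exact hE ψ
  · simp [lSeries, hEL ψ s hs, hψ]
  · have hs1 : s - 1 ≠ 0 := fun hs0 ↦ by
      rw [sub_eq_zero.mp hs0] at hs
      simp at hs
    simp only [lSeries, hEL 0 s hs, if_true]
    field_simp
  · simp [hκ.ne', Finite.card_pos.ne']

theorem not_summable_log_div (h : A.HasThetaAsymptotics κ C) (hκ : 0 < κ) (g : G) :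
    ¬ Summable fun p : {p // A.cls p = g} ↦ log (A.norm p) / A.norm p := by
  obtain ⟨Z, hZ⟩ := h.exists_isContinuation hκ
  exact hZ.not_summable_log_div h.zetaSummable g

end HasThetaAsymptotics

end PrimeSystem

section RayMonoid

variable {R : Type*} [CommRing R] {m : R}

theorem exists_mem_ne_zero_dvd_sub_one {I : Ideal R} (hI : I ≠ ⊥)
    (h : IsCoprime I (Ideal.span {m})) : ∃ γ ∈ I, γ ≠ 0 ∧ m ∣ γ - 1 := by
  obtain ⟨i, hi, j, hj, hij⟩ := Ideal.isCoprime_iff_exists.mp h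
  rw [Ideal.mem_span_singleton] at hj
  rcases eq_or_ne i 0 with rfl | hi0
  · obtain ⟨γ, hγ, hγ0⟩ := Submodule.exists_mem_ne_zero_of_ne_bot hI
    rw [zero_add] at hij
    exact ⟨γ, hγ, hγ0, (hij ▸ hj).trans (one_dvd _)⟩
  · refine ⟨i, hi, hi0, ?_⟩
    rwa [← hij, sub_add_cancel_left, dvd_neg]

variable [IsDomain R]

/-- The nonzero elements of `R` congruent to `1` modulo `m`. -/
def rayMonoid (m : R) : Submonoid R where
  carrier := {γ | γ ≠ 0 ∧ m ∣ γ - 1}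
  one_mem' := ⟨one_ne_zero, by simp⟩
  mul_mem' := by
    rintro α β ⟨hα, k, hk⟩ ⟨hβ, l, hl⟩
    exact ⟨mul_ne_zero hα hβ, k * β + l, by linear_combination β * hk + hl⟩

theorem mem_rayMonoid_iff_of_not_isUnit (hm : ¬ IsUnit m) {γ : R} :
    γ ∈ rayMonoid m ↔ m ∣ γ - 1 := by
  refine ⟨And.right, fun h ↦ ⟨?_, h⟩⟩
  rintro rfl
  rw [zero_sub, dvd_neg] at h
  exact hm (isUnit_of_dvd_one h)

theorem mem_rayMonoid_of_mul_mem_left {α γ : R} (hα : α ∈ rayMonoid m)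
    (hαγ : α * γ ∈ rayMonoid m) : γ ∈ rayMonoid m := by
  obtain ⟨-, k, hk⟩ := hα
  obtain ⟨h0, l, hl⟩ := hαγ
  exact ⟨right_ne_zero_of_mul h0, l - k * γ, by linear_combination hl - γ * hk⟩

theorem isCoprime_span_of_mem_rayMonoid {γ : R} (h : γ ∈ rayMonoid m) :
    IsCoprime (Ideal.span {γ}) (Ideal.span {m}) := by
  rw [Ideal.isCoprime_span_singleton_iff]
  obtain ⟨-, k, hk⟩ := h
  exact ⟨1, -k, by linear_combination hk⟩

theorem eq_of_mem_rayMonoid_of_span_eq (hunit : ∀ u : R, IsUnit u → m ∣ u - 1 → u = 1) {γ γ' : R}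
    (hγ : γ ∈ rayMonoid m) (hγ' : γ' ∈ rayMonoid m) (h : Ideal.span {γ} = Ideal.span {γ'}) :
    γ = γ' := by
  obtain ⟨u, rfl⟩ := Ideal.span_singleton_eq_span_singleton.mp h
  rw [hunit u u.isUnit (mem_rayMonoid_of_mul_mem_left hγ hγ').2, mul_one]

end RayMonoid

section IdealsPrimeTo

open IsDedekindDomain UniqueFactorizationMonoid nonZeroDivisors

variable {R : Type*} [CommRing R] {m : R}

/-- The maximal ideals of a Dedekind domain `R` that do not contain `m`. -/
abbrev PrimeTo (m : R) : Type _ := {v : HeightOneSpectrum R // m ∉ v.asIdeal}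

/-- The ideal with a given prime factorization, prime to `m`. Ideals prime to `m` are always
represented by their factorizations. -/
def idealOf (s : Multiset (PrimeTo m)) : Ideal R := (s.map fun v ↦ v.1.asIdeal).prod

theorem idealOf_zero : idealOf (0 : Multiset (PrimeTo m)) = 1 := by
  simp [idealOf]

theorem idealOf_add (s t : Multiset (PrimeTo m)) : idealOf (s + t) = idealOf s * idealOf t := by
  simp [idealOf]

theorem idealOf_singleton (v : PrimeTo m) : idealOf {v} = v.1.asIdeal := by
  simp [idealOf]

variable [IsDedekindDomain R]

theorem idealOf_ne_bot (s : Multiset (PrimeTo m)) : idealOf s ≠ ⊥ := by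
  refine Multiset.prod_ne_zero fun h ↦ ?_
  obtain ⟨v, -, hv⟩ := Multiset.mem_map.mp h
  exact v.1.ne_bot hv

theorem isCoprime_idealOf (s : Multiset (PrimeTo m)) :
    IsCoprime (idealOf s) (Ideal.span {m}) := by
  induction s using Multiset.induction_on with
  | empty => rw [idealOf_zero]; exact isCoprime_one_left
  | cons v s ih =>
    rw [← Multiset.singleton_add, idealOf_add, idealOf_singleton]
    refine IsCoprime.mul_left ?_ ih
    rw [Ideal.isCoprime_iff_sup_eq]
    refine v.1.isMaximal.1.2 _ (lt_of_le_of_ne le_sup_left fun h ↦ v.2 ?_)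
    rw [h]
    exact Ideal.mem_sup_right (Ideal.mem_span_singleton_self m)

theorem idealOf_injective : Function.Injective (idealOf : Multiset (PrimeTo m) → Ideal R) := by
  have hfactors (s : Multiset (PrimeTo m)) :
      normalizedFactors (idealOf s) = s.map fun v ↦ v.1.asIdeal := by
    refine normalizedFactors_prod_of_prime fun p hp ↦ ?_
    obtain ⟨v, -, rfl⟩ := Multiset.mem_map.mp hp
    exact v.1.prime
  intro s t h
  refine Multiset.map_injective (fun v w hvw ↦ Subtype.ext (HeightOneSpectrum.ext hvw)) ?_
  rw [← hfactors, ← hfactors, h]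

theorem exists_primeTo_asIdeal_eq {I p : Ideal R} (h : IsCoprime I (Ideal.span {m}))
    (hp : p ∈ normalizedFactors I) : ∃ v : PrimeTo m, v.1.asIdeal = p := by
  have hprime := prime_of_normalized_factor p hp
  refine ⟨⟨⟨p, Ideal.isPrime_of_prime hprime, hprime.ne_zero⟩, fun hm ↦ ?_⟩, rfl⟩
  rw [Ideal.isCoprime_iff_sup_eq] at h
  refine (Ideal.isPrime_of_prime hprime).ne_top (top_le_iff.mp (h ▸ sup_le ?_ ?_))
  · exact Ideal.le_of_dvd (dvd_of_mem_normalizedFactors hp)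
  · exact (Ideal.span_singleton_le_iff_mem _).mpr hm

theorem exists_idealOf_eq {I : Ideal R} (hI : I ≠ ⊥) (h : IsCoprime I (Ideal.span {m})) :
    ∃ s : Multiset (PrimeTo m), idealOf s = I := by
  choose f hf using fun p (hp : p ∈ normalizedFactors I) ↦ exists_primeTo_asIdeal_eq h hp
  refine ⟨(normalizedFactors I).attach.map fun p ↦ f p.1 p.2, ?_⟩
  simp only [idealOf, Multiset.map_map, Function.comp_apply, hf]
  rw [Multiset.attach_map_val, Ideal.prod_normalizedFactors_eq_self hI]

theorem exists_idealOf_mul_eq_span_of_mem {t : Multiset (PrimeTo m)} {γ : R} (hγ : γ ∈ idealOf t)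
    (hγm : γ ∈ rayMonoid m) :
    ∃ s : Multiset (PrimeTo m), idealOf s * idealOf t = Ideal.span {γ} := by
  obtain ⟨J, hJ⟩ := Ideal.dvd_span_singleton.mpr hγ
  have hJ0 : J ≠ ⊥ := by
    rintro rfl
    rw [Ideal.mul_bot, Ideal.span_singleton_eq_bot] at hJ
    exact hγm.1 hJ
  have hJm : IsCoprime J (Ideal.span {m}) :=
    (hJ ▸ isCoprime_span_of_mem_rayMonoid hγm).of_mul_left_right
  obtain ⟨s, rfl⟩ := exists_idealOf_eq hJ0 hJm
  exact ⟨s, by rw [hJ, mul_comm]⟩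

theorem exists_idealOf_mul_eq_span (t : Multiset (PrimeTo m)) :
    ∃ s : Multiset (PrimeTo m), ∃ γ ∈ rayMonoid m, idealOf s * idealOf t = Ideal.span {γ} := by
  obtain ⟨γ, hγ, hγm⟩ := exists_mem_ne_zero_dvd_sub_one (idealOf_ne_bot t) (isCoprime_idealOf t)
  obtain ⟨s, hs⟩ := exists_idealOf_mul_eq_span_of_mem hγ hγm
  exact ⟨s, γ, hγm, hs⟩

/-- The class in the ideal class group of an ideal prime to `m`. -/
noncomputable def idealClass (s : Multiset (PrimeTo m)) : ClassGroup R :=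
  ClassGroup.mk0 ⟨idealOf s, mem_nonZeroDivisors_of_ne_zero (idealOf_ne_bot s)⟩

theorem idealClass_add (s t : Multiset (PrimeTo m)) :
    idealClass (s + t) = idealClass s * idealClass t := by
  simp only [idealClass, idealOf_add, ← map_mul]
  rfl

theorem idealClass_eq_one_iff {s : Multiset (PrimeTo m)} :
    idealClass s = 1 ↔ (idealOf s).IsPrincipal :=
  ClassGroup.mk0_eq_one_iff _

end IdealsPrimeTo

section RayClassGroup

variable {R : Type*} [CommRing R] [IsDedekindDomain R] {m : R}

/-- Equivalence of ideals prime to `m` up to principal ideals generated by elements congruent to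
`1` modulo `m`. -/
def rayCon (m : R) : AddCon (Multiset (PrimeTo m)) where
  r s t := ∃ α ∈ rayMonoid m, ∃ β ∈ rayMonoid m,
    Ideal.span {α} * idealOf s = Ideal.span {β} * idealOf t
  iseqv :=
    { refl := fun s ↦ ⟨1, one_mem _, 1, one_mem _, rfl⟩
      symm := fun ⟨α, hα, β, hβ, h⟩ ↦ ⟨β, hβ, α, hα, h.symm⟩
      trans := by
        rintro s t u ⟨α, hα, β, hβ, h⟩ ⟨α', hα', β', hβ', h'⟩
        refine ⟨α * α', mul_mem hα hα', β * β', mul_mem hβ hβ', ?_⟩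
        rw [← Ideal.span_singleton_mul_span_singleton, ← Ideal.span_singleton_mul_span_singleton,
          mul_right_comm, h, mul_right_comm, mul_assoc, mul_assoc, ← h', mul_left_comm] }
  add' := by
    rintro s t u v ⟨α, hα, β, hβ, h⟩ ⟨α', hα', β', hβ', h'⟩
    refine ⟨α * α', mul_mem hα hα', β * β', mul_mem hβ hβ', ?_⟩
    rw [← Ideal.span_singleton_mul_span_singleton, ← Ideal.span_singleton_mul_span_singleton,
      idealOf_add, idealOf_add, mul_mul_mul_comm, h, h', mul_mul_mul_comm]

/-- The ray class group modulo `m`, with no condition at infinite places. -/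
abbrev RayClassGroup (m : R) : Type _ := (rayCon m).Quotient

/-- The ray class of an ideal prime to `m`. -/
def rayClass (s : Multiset (PrimeTo m)) : RayClassGroup m := (s : (rayCon m).Quotient)

theorem rayClass_eq_iff {s t : Multiset (PrimeTo m)} : rayClass s = rayClass t ↔
    ∃ α ∈ rayMonoid m, ∃ β ∈ rayMonoid m,
      Ideal.span {α} * idealOf s = Ideal.span {β} * idealOf t :=
  AddCon.eq _

theorem rayClass_add (s t : Multiset (PrimeTo m)) :
    rayClass (s + t) = rayClass s + rayClass t := rfl

theorem rayClass_surjective : Function.Surjective (rayClass : Multiset (PrimeTo m) → _) :=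
  Quotient.mk''_surjective

theorem rayClass_eq_zero_iff {s : Multiset (PrimeTo m)} :
    rayClass s = 0 ↔ ∃ γ ∈ rayMonoid m, idealOf s = Ideal.span {γ} := by
  change rayClass s = rayClass 0 ↔ _
  rw [rayClass_eq_iff, idealOf_zero]
  constructor
  · rintro ⟨α, hα, β, hβ, h⟩
    rw [mul_one] at h
    obtain ⟨γ, rfl⟩ := Ideal.mem_span_singleton.mp
      (Ideal.mul_le_left (h.ge (Ideal.mem_span_singleton_self β)))
    refine ⟨γ, mem_rayMonoid_of_mul_mem_left hα hβ, ?_⟩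
    rw [← Ideal.span_singleton_mul_span_singleton] at h
    refine mul_left_cancel₀ ?_ h
    rw [Ne, Ideal.zero_eq_bot, Ideal.span_singleton_eq_bot]
    exact hα.1
  · rintro ⟨γ, hγ, h⟩
    refine ⟨1, one_mem _, γ, hγ, ?_⟩
    rw [h, mul_one, Ideal.span_singleton_one, Ideal.top_mul]

theorem exists_add_eq_zero (g : RayClassGroup m) : ∃ h : RayClassGroup m, h + g = 0 := by
  obtain ⟨t, rfl⟩ := rayClass_surjective g
  obtain ⟨s, γ, hγ, h⟩ := exists_idealOf_mul_eq_span t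
  exact ⟨rayClass s, rayClass_eq_zero_iff.mpr ⟨γ, hγ, (idealOf_add s t).trans h⟩⟩

noncomputable instance : Neg (RayClassGroup m) :=
  ⟨fun g ↦ (exists_add_eq_zero g).choose⟩

noncomputable instance : AddCommGroup (RayClassGroup m) where
  zsmul := zsmulRec
  neg_add_cancel g := (exists_add_eq_zero g).choose_spec
  add_comm := add_comm

theorem sum_map_rayClass (s : Multiset (PrimeTo m)) :
    (s.map fun v ↦ rayClass {v}).sum = rayClass s := by
  induction s using Multiset.induction_on with
  | empty => rfl
  | cons v s ih => rw [Multiset.map_cons, Multiset.sum_cons, ih, ← rayClass_add,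
      Multiset.singleton_add]

theorem rayClass_eq_of_mul_eq_span {s s' t : Multiset (PrimeTo m)} {γ γ' : R}
    (h : idealOf s * idealOf t = Ideal.span {γ}) (h' : idealOf s' * idealOf t = Ideal.span {γ'})
    (hγ : m ∣ γ - γ') : rayClass s = rayClass s' := by
  have hne {s : Multiset (PrimeTo m)} {γ : R} (h : idealOf s * idealOf t = Ideal.span {γ}) :
      γ ≠ 0 := by
    rintro rfl
    rw [Ideal.span_singleton_eq_bot.mpr rfl, ← idealOf_add] at h
    exact idealOf_ne_bot _ h
  obtain ⟨ε, hε, hεm⟩ := exists_mem_ne_zero_dvd_sub_one (m := m)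
    (idealOf_ne_bot (s + t)) (isCoprime_idealOf _)
  rw [idealOf_add, h] at hε
  obtain ⟨δ, rfl⟩ := Ideal.mem_span_singleton.mp hε
  refine rayClass_eq_iff.mpr ⟨γ' * δ, ⟨?_, ?_⟩, γ * δ, hεm, ?_⟩
  · exact mul_ne_zero (hne h') (right_ne_zero_of_mul hεm.1)
  · obtain ⟨k, hk⟩ := hγ
    obtain ⟨l, hl⟩ := hεm.2
    exact ⟨l - k * δ, by linear_combination hl - δ * hk⟩
  · rw [← Ideal.span_singleton_mul_span_singleton, ← Ideal.span_singleton_mul_span_singleton]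
    refine mul_right_cancel₀ (idealOf_ne_bot t) ?_
    rw [mul_assoc, h, mul_assoc _ _ (idealOf t), h', mul_right_comm, mul_comm (Ideal.span {γ'}),
      mul_right_comm]

-- Multiplication by an ideal in the inverse ideal class makes the ideals of one class principal,
-- and then their ray classes depend only on the residues of generators modulo `m`.
theorem finite_rayClassGroup [Finite (ClassGroup R)] [Finite (R ⧸ Ideal.span {m})] :
    Finite (RayClassGroup m) := by
  have hinv (C : ClassGroup R) : ∃ t : Multiset (PrimeTo m), ∀ s, idealClass s = C →
      idealClass (s + t) = 1 := by
    by_cases hC : ∃ s : Multiset (PrimeTo m), idealClass s = C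
    · obtain ⟨s, rfl⟩ := hC
      obtain ⟨t, γ, -, h⟩ := exists_idealOf_mul_eq_span s
      refine ⟨t, fun s' hs' ↦ ?_⟩
      rw [idealClass_add, hs', mul_comm, ← idealClass_add, idealClass_eq_one_iff, idealOf_add]
      exact ⟨γ, h⟩
    · exact ⟨0, fun s hs ↦ absurd ⟨s, hs⟩ hC⟩
  choose T hT using hinv
  have hgen (s : Multiset (PrimeTo m)) :
      ∃ γ, idealOf s * idealOf (T (idealClass s)) = Ideal.span {γ} := by
    rw [← idealOf_add]
    exact (idealClass_eq_one_iff.mp (hT _ s rfl)).principal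
  choose γ hγ using hgen
  set rep := Function.surjInv (rayClass_surjective (m := m))
  refine Finite.of_injective (β := ClassGroup R × (R ⧸ Ideal.span {m}))
    (fun g ↦ (idealClass (rep g), Ideal.Quotient.mk _ (γ (rep g)))) fun g g' h ↦ ?_
  obtain ⟨hclass, hres⟩ := Prod.ext_iff.mp h
  dsimp only at hclass hres
  rw [← Function.surjInv_eq rayClass_surjective g, ← Function.surjInv_eq rayClass_surjective g']
  refine rayClass_eq_of_mul_eq_span (hγ _) (by rw [hclass]; exact hγ _) ?_
  rwa [← Ideal.mem_span_singleton, ← Ideal.Quotient.eq]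

theorem exists_equiv_rayClass (hunit : ∀ u : R, IsUnit u → m ∣ u - 1 → u = 1)
    {g : RayClassGroup m} {t : Multiset (PrimeTo m)} (ht : g + rayClass t = 0) :
    ∃ e : {γ : R // γ ∈ idealOf t ∧ γ ∈ rayMonoid m} ≃ {s // rayClass s = g},
      ∀ γ, idealOf (e γ).1 * idealOf t = Ideal.span {γ.1} := by
  have hex (γ : {γ : R // γ ∈ idealOf t ∧ γ ∈ rayMonoid m}) :
      ∃ s : {s // rayClass s = g}, idealOf s.1 * idealOf t = Ideal.span {γ.1} := by
    obtain ⟨γ, hγ, hγm⟩ := γ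
    obtain ⟨s, hs⟩ := exists_idealOf_mul_eq_span_of_mem hγ hγm
    refine ⟨⟨s, add_right_cancel (b := rayClass t) ?_⟩, hs⟩
    rw [ht, ← rayClass_add]
    exact rayClass_eq_zero_iff.mpr ⟨γ, hγm, (idealOf_add s t).trans hs⟩
  choose f hf using hex
  refine ⟨Equiv.ofBijective f ⟨fun γ γ' h ↦ ?_, fun ⟨s, hs⟩ ↦ ?_⟩, hf⟩
  · refine Subtype.ext (eq_of_mem_rayMonoid_of_span_eq hunit γ.2.2 γ'.2.2 ?_)
    rw [← hf, ← hf, h]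
  · obtain ⟨γ, hγm, hγ⟩ : ∃ γ ∈ rayMonoid m, idealOf (s + t) = Ideal.span {γ} := by
      rw [← rayClass_eq_zero_iff, rayClass_add, hs, ht]
    rw [idealOf_add] at hγ
    refine ⟨⟨γ, Ideal.mul_le_right (hγ.ge (Ideal.mem_span_singleton_self γ)), hγm⟩, ?_⟩
    refine Subtype.ext (idealOf_injective (mul_right_cancel₀ (idealOf_ne_bot t) ?_))
    exact (hf _).trans hγ.symm

end RayClassGroup

section QuadraticGenerator

open Ideal

variable {R : Type*} [CommRing R]

/-- The additive group `n (ℤ + ℤ ω)`. -/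
def quadLattice (ω : R) (n : ℕ) : AddSubgroup R where
  carrier := {x | ∃ X Y : ℤ, x = n * (X + Y * ω)}
  add_mem' := by
    rintro _ _ ⟨X, Y, rfl⟩ ⟨X', Y', rfl⟩
    exact ⟨X + X', Y + Y', by push_cast; ring⟩
  zero_mem' := ⟨0, 0, by simp⟩
  neg_mem' := by
    rintro _ ⟨X, Y, rfl⟩
    exact ⟨-X, -Y, by push_cast; ring⟩

theorem mem_quadLattice {ω : R} {n : ℕ} {x : R} :
    x ∈ quadLattice ω n ↔ ∃ X Y : ℤ, x = n * (X + Y * ω) := Iff.rfl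

theorem map_mulLeft_quadLattice_one (ω : R) (n : ℕ) :
    (quadLattice ω 1).map (AddMonoidHom.mulLeft (n : R)) = quadLattice ω n := by
  ext x
  simp only [AddSubgroup.mem_map, mem_quadLattice, AddMonoidHom.coe_mulLeft]
  constructor
  · rintro ⟨_, ⟨X, Y, rfl⟩, rfl⟩
    exact ⟨X, Y, by simp⟩
  · rintro ⟨X, Y, rfl⟩
    exact ⟨_, ⟨X, Y, rfl⟩, by simp⟩

theorem map_mulLeft_top (x : R) :
    (⊤ : AddSubgroup R).map (AddMonoidHom.mulLeft x) = (span {x}).toAddSubgroup := by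
  ext y
  simp only [Submodule.mem_toAddSubgroup, mem_span_singleton, AddSubgroup.mem_map,
    AddSubgroup.mem_top, true_and, AddMonoidHom.coe_mulLeft, dvd_def, eq_comm]

variable [IsDedekindDomain R] [Module.Free ℤ R]

theorem quadLattice_mul_absNorm_le (ω : R) (m : ℕ) (I : Ideal R) :
    quadLattice ω (m * absNorm I) ≤ (I ⊓ span {(m : R)}).toAddSubgroup := by
  rintro _ ⟨X, Y, rfl⟩
  rw [Nat.cast_mul, mul_assoc]
  refine ⟨I.mul_mem_left _ (I.mul_mem_right _ (absNorm_mem I)), ?_⟩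
  exact mem_span_singleton.mpr (dvd_mul_right _ _)

/-- `ω` generates a quadratic order of discriminant `-m`, with norm form
`X² + bXY + eY²`, whose index in `R` divides a power of `m`. -/
structure IsQuadraticGenerator (ω : R) (b e : ℤ) (m : ℕ) : Prop where
  three_le : 3 ≤ m
  disc : (m : ℤ) = 4 * e - b ^ 2
  exists_mul_eq : ∀ α : R, ∃ X Y : ℤ, (m : R) * α = X + Y * ω
  absNorm_eq : ∀ X Y : ℤ, (absNorm (span {(X + Y * ω : R)}) : ℤ) = X ^ 2 + b * X * Y + e * Y ^ 2

namespace IsQuadraticGenerator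

variable {ω : R} {b e : ℤ} {m : ℕ} (h : IsQuadraticGenerator ω b e m)

include h

theorem four_mul_absNorm (X Y : ℤ) :
    4 * (absNorm (span {(X + Y * ω : R)}) : ℤ) = (2 * X + b * Y) ^ 2 + m * Y ^ 2 := by
  rw [h.absNorm_eq, h.disc]
  ring

theorem pos : 0 < m := three_pos.trans_le h.three_le

theorem eq_zero {X Y : ℤ} (hXY : (X + Y * ω : R) = 0) : X = 0 ∧ Y = 0 := by
  have hnorm := h.four_mul_absNorm X Y
  rw [hXY, span_singleton_eq_bot.mpr rfl, absNorm_bot, Nat.cast_zero, mul_zero] at hnorm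
  have hm : (0 : ℤ) < m := Nat.cast_pos.mpr h.pos
  obtain ⟨hX, hY⟩ := (add_eq_zero_iff_of_nonneg (sq_nonneg _)
    (mul_nonneg hm.le (sq_nonneg Y))).mp hnorm.symm
  obtain rfl : Y = 0 := by simpa [h.pos.ne'] using hY
  exact ⟨by simpa using hX, rfl⟩

theorem eq_and_eq {X Y X' Y' : ℤ} (hXY : (X + Y * ω : R) = X' + Y' * ω) : X = X' ∧ Y = Y' := by
  have := h.eq_zero (X := X - X') (Y := Y - Y') (by push_cast; linear_combination hXY)
  omega

theorem absNorm_natCast (n : ℕ) : absNorm (span {(n : R)}) = n ^ 2 := by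
  have hnorm := h.absNorm_eq n 0
  simp only [Int.cast_natCast, Int.cast_zero, zero_mul, add_zero, mul_zero] at hnorm
  zify
  rw [hnorm]
  ring

theorem natCast_ne_zero {n : ℕ} (hn : n ≠ 0) : (n : R) ≠ 0 := by
  intro h0
  have hnorm := h.absNorm_natCast n
  rw [h0, span_singleton_eq_bot.mpr rfl, absNorm_bot] at hnorm
  exact pow_ne_zero 2 hn hnorm.symm

theorem sq_mul_absNorm {α : R} {X Y : ℤ} (hα : (m : R) * α = X + Y * ω) :
    (m : ℤ) ^ 2 * absNorm (span {α}) = X ^ 2 + b * X * Y + e * Y ^ 2 := by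
  rw [← h.absNorm_eq, ← hα, ← span_singleton_mul_span_singleton, map_mul, h.absNorm_natCast]
  push_cast
  rfl

theorem not_isUnit : ¬ IsUnit (m : R) := by
  intro hm
  have hnorm := h.absNorm_natCast m
  rw [span_singleton_eq_top.mpr hm, absNorm_top] at hnorm
  have := h.three_le
  nlinarith

-- A unit has `|2X + bY| ≤ 2`, so that `m α = u - 1` has norm at most `4 < m²`.
theorem eq_one_of_isUnit [Module.Finite ℤ R] {u : R} (hu : IsUnit u) (hum : (m : R) ∣ u - 1) :
    u = 1 := by
  obtain ⟨α, hα⟩ := hum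
  obtain ⟨X, Y, hXY⟩ := h.exists_mul_eq α
  have hα_norm := h.sq_mul_absNorm hXY
  have hu_norm := h.four_mul_absNorm (X + 1) Y
  have hu_eq : ((X + 1 : ℤ) : R) + Y * ω = u := by
    push_cast
    linear_combination -hα - hXY
  rw [hu_eq, span_singleton_eq_top.mpr hu, absNorm_top, Nat.cast_one] at hu_norm
  have hm : (3 : ℤ) ≤ m := by exact_mod_cast h.three_le
  have htrace : -2 ≤ 2 * (X + 1) + b * Y := by
    nlinarith [mul_nonneg (by lia : (0 : ℤ) ≤ m) (sq_nonneg Y)]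
  have hle : (m : ℤ) ^ 2 * absNorm (span {α}) ≤ 4 := by
    have : 4 * ((m : ℤ) ^ 2 * absNorm (span {α})) = 8 - 4 * (2 * (X + 1) + b * Y) := by
      rw [hα_norm]
      linear_combination -hu_norm - Y ^ 2 * h.disc
    linarith
  have hα0 : absNorm (span {α}) = 0 := by
    by_contra hne
    have : (1 : ℤ) ≤ absNorm (span {α}) := by exact_mod_cast Nat.one_le_iff_ne_zero.mpr hne
    nlinarith
  rw [absNorm_eq_zero_iff, span_singleton_eq_bot] at hα0
  rw [hα0, mul_zero] at hα
  exact sub_eq_zero.mp hα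

theorem finite_quotient : Finite (R ⧸ span {(m : R)}) :=
  Nat.finite_of_card_ne_zero <| by
    rw [← Submodule.cardQuot_apply, ← absNorm_apply, h.absNorm_natCast]
    exact pow_ne_zero 2 h.pos.ne'

theorem index_quadLattice {n : ℕ} (hn : n ≠ 0) :
    (quadLattice ω n).index = (quadLattice ω 1).index * n ^ 2 := by
  have hle : quadLattice ω n ≤ (span {(n : R)}).toAddSubgroup := by
    rw [← map_mulLeft_quadLattice_one, ← map_mulLeft_top]
    exact AddSubgroup.map_mono le_top
  rw [← AddSubgroup.relIndex_mul_index hle, ← absNorm_eq_index, h.absNorm_natCast,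
    ← map_mulLeft_quadLattice_one, ← map_mulLeft_top,
    AddSubgroup.relIndex_map_map_of_injective _ _ (mul_right_injective₀ (h.natCast_ne_zero hn)),
    AddSubgroup.relIndex_top_right]

theorem index_quadLattice_one_ne_zero : (quadLattice ω 1).index ≠ 0 := by
  have hle : (span {(m : R)}).toAddSubgroup ≤ quadLattice ω 1 := by
    intro x hx
    obtain ⟨α, rfl⟩ := mem_span_singleton.mp hx
    obtain ⟨X, Y, hXY⟩ := h.exists_mul_eq α
    exact ⟨X, Y, by simpa using hXY⟩
  have hdvd := AddSubgroup.index_dvd_of_le hle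
  rw [← absNorm_eq_index, h.absNorm_natCast] at hdvd
  exact ne_zero_of_dvd_ne_zero (pow_ne_zero 2 h.pos.ne') hdvd

theorem relIndex_quadLattice [Module.Finite ℤ R] {I : Ideal R} (hI : I ≠ ⊥)
    (hIm : IsCoprime I (span {(m : R)})) :
    (quadLattice ω (m * absNorm I)).relIndex (I ⊓ span {(m : R)}).toAddSubgroup =
      (quadLattice ω 1).index * absNorm I := by
  have hI0 : absNorm I ≠ 0 := by rwa [Ne, absNorm_eq_zero_iff]
  have hmul := AddSubgroup.relIndex_mul_index (quadLattice_mul_absNorm_le ω m I)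
  rw [← absNorm_eq_index, ← mul_eq_inf_of_isCoprime hIm, map_mul, h.absNorm_natCast,
    h.index_quadLattice (mul_ne_zero h.pos.ne' hI0)] at hmul
  refine Nat.eq_of_mul_eq_mul_right
    (Nat.pos_of_ne_zero (mul_ne_zero hI0 (pow_ne_zero 2 h.pos.ne'))) ?_
  rw [← mul_eq_inf_of_isCoprime hIm, hmul]
  ring

theorem exists_equiv_quadLattice {n : ℕ} (hn : n ≠ 0) :
    ∃ e : ℤ × ℤ ≃ quadLattice ω n, ∀ p, (e p : R) = n * (p.1 + p.2 * ω) := by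
  refine ⟨Equiv.ofBijective (fun p ↦ ⟨n * (p.1 + p.2 * ω), p.1, p.2, rfl⟩) ⟨fun p q hpq ↦ ?_, ?_⟩,
    fun p ↦ rfl⟩
  · obtain ⟨hX, hY⟩ :=
      h.eq_and_eq (mul_left_cancel₀ (h.natCast_ne_zero hn) (congrArg Subtype.val hpq))
    exact Prod.ext hX hY
  · rintro ⟨_, X, Y, rfl⟩
    exact ⟨(X, Y), rfl⟩

end IsQuadraticGenerator

end QuadraticGenerator

section RaySum

open Ideal Real

theorem exists_equiv_quotient_prod {A : Type*} [AddCommGroup A] {H M : AddSubgroup A}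
    (hle : H ≤ M) (a : A) :
    ∃ (r : M ⧸ H.addSubgroupOf M → A) (φ : (M ⧸ H.addSubgroupOf M) × H ≃ {x // x - a ∈ M}),
      ∀ q y, (φ (q, y) : A) = r q + y := by
  refine ⟨fun q ↦ a + q.out, Equiv.ofBijective (fun p ↦ ⟨a + p.1.out + p.2, ?_⟩) ⟨?_, ?_⟩,
    fun q y ↦ rfl⟩
  · rw [add_assoc, add_sub_cancel_left]
    exact add_mem p.1.out.2 (hle p.2.2)
  · rintro ⟨q, y⟩ ⟨q', y'⟩ h
    have hval : a + q.out + y = a + q'.out + y' := congrArg Subtype.val h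
    obtain rfl : q = q' := by
      rw [← QuotientAddGroup.out_eq' q, ← QuotientAddGroup.out_eq' q', QuotientAddGroup.eq,
        AddSubgroup.mem_addSubgroupOf]
      convert sub_mem y.2 y'.2 using 1
      rw [add_assoc, add_assoc, add_right_inj] at hval
      push_cast
      rw [neg_add_eq_sub, sub_eq_sub_iff_add_eq_add, add_comm (y : A), hval, add_comm]
    exact Prod.ext rfl (Subtype.ext (add_left_cancel hval))
  · rintro ⟨x, hx⟩
    have hout := QuotientAddGroup.out_eq' (QuotientAddGroup.mk ⟨x - a, hx⟩ : M ⧸ H.addSubgroupOf M)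
    rw [QuotientAddGroup.eq, AddSubgroup.mem_addSubgroupOf] at hout
    refine ⟨(QuotientAddGroup.mk ⟨x - a, hx⟩, ⟨_, hout⟩), Subtype.ext ?_⟩
    push_cast
    abel

variable {R : Type*} [CommRing R] [IsDedekindDomain R] [Module.Free ℤ R]

namespace IsQuadraticGenerator

variable {ω : R} {b e : ℤ} {m : ℕ} (h : IsQuadraticGenerator ω b e m)

include h

theorem exp_absNorm_eq_quadGaussian {n : ℕ} (hn : n ≠ 0) {r : R} {X Y : ℤ}
    (hr : (m : R) * r = X + Y * ω) (p : ℤ × ℤ) (t : ℝ) :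
    rexp (-absNorm (span {r + n * (p.1 + p.2 * ω)}) * t) =
      quadGaussian (b / 2) (m / 4) (X / (m * n)) (Y / (m * n)) (n ^ 2 * t / π) p := by
  have hm0 : (0 : ℝ) < m := Nat.cast_pos.mpr h.pos
  have hmul : (m : R) * (r + n * (p.1 + p.2 * ω)) =
      ((X + m * n * p.1 : ℤ) : R) + ((Y + m * n * p.2 : ℤ) : R) * ω := by
    push_cast
    linear_combination hr
  have hnorm : (m : ℝ) ^ 2 * (absNorm (span {r + n * (p.1 + p.2 * ω)}) : ℝ) =
      (X + m * n * p.1) ^ 2 + b * (X + m * n * p.1) * (Y + m * n * p.2) +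
        e * (Y + m * n * p.2) ^ 2 := by
    exact_mod_cast h.sq_mul_absNorm hmul
  have hdisc : (m : ℝ) = 4 * e - b ^ 2 := by exact_mod_cast h.disc
  have he : (e : ℝ) = (m + b ^ 2) / 4 := by linarith
  rw [eq_div_of_mul_eq (pow_ne_zero 2 hm0.ne') ((mul_comm _ _).trans hnorm), he, quadGaussian]
  congr 1
  field_simp
  ring

variable [Module.Finite ℤ R] {I : Ideal R} (hI : I ≠ ⊥) (hIm : IsCoprime I (span {(m : R)}))

include hI hIm

theorem exists_equiv_prod :
    ∃ (k : ℕ) (r : Fin k → R) (φ : Fin k × (ℤ × ℤ) ≃ {γ : R // γ ∈ I ∧ γ ∈ rayMonoid (m : R)}),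
      k = (quadLattice ω 1).index * absNorm I ∧
      ∀ i p, (φ (i, p) : R) = r i + (m * absNorm I : ℕ) * (p.1 + p.2 * ω) := by
  have hI0 : absNorm I ≠ 0 := by rwa [Ne, absNorm_eq_zero_iff]
  obtain ⟨γ₀, hγ₀, -, hγ₀m⟩ := exists_mem_ne_zero_dvd_sub_one hI hIm
  obtain ⟨r, φ, hφ⟩ := exists_equiv_quotient_prod (quadLattice_mul_absNorm_le ω m I) γ₀
  obtain ⟨ℓ, hℓ⟩ := h.exists_equiv_quadLattice (mul_ne_zero h.pos.ne' hI0)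
  have hindex := h.relIndex_quadLattice hI hIm
  have hfinite := Nat.finite_of_card_ne_zero
    (hindex.trans_ne (mul_ne_zero h.index_quadLattice_one_ne_zero hI0))
  have hmem (γ : R) : γ - γ₀ ∈ (I ⊓ span {(m : R)}).toAddSubgroup ↔
      γ ∈ I ∧ γ ∈ rayMonoid (m : R) := by
    rw [mem_rayMonoid_iff_of_not_isUnit h.not_isUnit, Submodule.mem_toAddSubgroup,
      Submodule.mem_inf, mem_span_singleton, I.sub_mem_iff_left hγ₀,
      ← dvd_add_left (b := γ - γ₀) hγ₀m, sub_add_sub_cancel]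
  refine ⟨_, r ∘ (Finite.equivFin _).symm, (((Finite.equivFin _).symm.prodCongr ℓ).trans φ).trans
    (Equiv.subtypeEquivRight hmem), hindex, fun i p ↦ ?_⟩
  simp [hφ, hℓ]

theorem exists_equiv_exp_eq_quadGaussian :
    ∃ (k : ℕ) (u v : Fin k → ℝ)
      (φ : Fin k × (ℤ × ℤ) ≃ {γ : R // γ ∈ I ∧ γ ∈ rayMonoid (m : R)}),
      k = (quadLattice ω 1).index * absNorm I ∧
      ∀ i p (t : ℝ), rexp (-(absNorm (span {(φ (i, p)).1}) / absNorm I) * t) =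
        quadGaussian (b / 2) (m / 4) (u i) (v i) (m ^ 2 * absNorm I * t / π) p := by
  have hI0 : absNorm I ≠ 0 := by rwa [Ne, absNorm_eq_zero_iff]
  obtain ⟨k, r, φ, hk, hφ⟩ := h.exists_equiv_prod hI hIm
  choose X Y hXY using fun i ↦ h.exists_mul_eq (r i)
  refine ⟨k, fun i ↦ X i / (m * (m * absNorm I : ℕ)), fun i ↦ Y i / (m * (m * absNorm I : ℕ)),
    φ, hk, fun i p t ↦ ?_⟩
  convert h.exp_absNorm_eq_quadGaussian (mul_ne_zero h.pos.ne' hI0) (hXY i) p (t / absNorm I)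
    using 2
  · rw [hφ]
    ring
  · push_cast
    field_simp

theorem summable_exp_absNorm_div {t : ℝ} (ht : 0 < t) :
    Summable fun γ : {γ : R // γ ∈ I ∧ γ ∈ rayMonoid (m : R)} ↦
      rexp (-(absNorm (span {γ.1}) / absNorm I) * t) := by
  have hm0 : (0 : ℝ) < m := Nat.cast_pos.mpr h.pos
  have hI0 : (0 : ℝ) < absNorm I := by rwa [Nat.cast_pos, absNorm_pos_iff_mem_nonZeroDivisors,
    mem_nonZeroDivisors_iff_ne_zero]
  obtain ⟨k, u, v, φ, -, hφ⟩ := h.exists_equiv_exp_eq_quadGaussian hI hIm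
  refine φ.summable_iff.mp ((summable_prod_of_nonneg fun _ ↦ (exp_pos _).le).mpr ?_)
  simp only [hφ]
  exact ⟨fun i ↦ summable_quadGaussian _ _ _ (by positivity) (by positivity), .of_finite⟩

theorem exists_abs_tsum_exp_absNorm_div_sub_le :
    ∃ C : ℝ, ∀ t : ℝ, 0 < t → t ≤ 1 →
      |(∑' γ : {γ : R // γ ∈ I ∧ γ ∈ rayMonoid (m : R)},
        rexp (-(absNorm (span {γ.1}) / absNorm I) * t)) -
          π * (quadLattice ω 1).index / (√(m / 4) * m ^ 2) / t| ≤ C := by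
  have hm0 : (0 : ℝ) < m := Nat.cast_pos.mpr h.pos
  have hI0 : (0 : ℝ) < absNorm I := by rwa [Nat.cast_pos, absNorm_pos_iff_mem_nonZeroDivisors,
    mem_nonZeroDivisors_iff_ne_zero]
  obtain ⟨k, u, v, φ, hk, hφ⟩ := h.exists_equiv_exp_eq_quadGaussian hI hIm
  obtain ⟨C, hC0, hC⟩ := exists_abs_tsum_quadGaussian_sub_le (b / 2) (δ := m / 4) (by positivity)
  set T : ℝ → ℝ := fun t ↦ m ^ 2 * absNorm I * t / π
  refine ⟨k * (C * (1 + T 1)), fun t ht ht1 ↦ ?_⟩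
  have hT : 0 < T t := by positivity
  have hsum : Summable fun x ↦ rexp (-(absNorm (span {(φ x).1}) / absNorm I) * t) :=
    φ.summable_iff.mpr (h.summable_exp_absNorm_div hI hIm ht)
  rw [← φ.tsum_eq, hsum.tsum_prod, tsum_fintype]
  have hmain : π * (quadLattice ω 1).index / (√(m / 4) * m ^ 2) / t =
      ∑ i : Fin k, 1 / (√(m / 4) * T t) := by
    rw [Finset.sum_const, Finset.card_univ, Fintype.card_fin, nsmul_eq_mul, hk]
    simp only [T]
    push_cast
    field_simp
  rw [hmain, ← Finset.sum_sub_distrib]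
  refine (Finset.abs_sum_le_sum_abs _ _).trans ?_
  refine (Finset.sum_le_card_nsmul _ _ (C * (1 + T 1)) fun i _ ↦ ?_).trans (by simp)
  simp only [hφ]
  refine (hC _ _ _ hT).trans ?_
  simp only [T]
  gcongr

end IsQuadraticGenerator

end RaySum

section PrimesInRayClass

open Ideal Real

variable {R : Type*} [CommRing R] [IsDedekindDomain R] [Module.Free ℤ R] [Module.Finite ℤ R]

/-- The primes of `R` not containing `m`, with their absolute norms and ray classes. -/
noncomputable def rayPrimeSystem (m : R) : PrimeSystem (PrimeTo m) (RayClassGroup m) where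
  norm v := absNorm v.1.asIdeal
  cls v := rayClass {v}
  two_le_norm v := by
    have h0 : absNorm v.1.asIdeal ≠ 0 := absNorm_eq_zero_iff.not.mpr v.1.ne_bot
    have h1 : absNorm v.1.asIdeal ≠ 1 := absNorm_eq_one_iff.not.mpr v.1.isPrime.ne_top
    omega

theorem rayPrimeSystem_intNorm {m : R} (s : Multiset (PrimeTo m)) :
    (rayPrimeSystem m).intNorm s = absNorm (idealOf s) := by
  rw [PrimeSystem.intNorm, idealOf, map_multiset_prod, Multiset.map_map]
  rfl

theorem rayPrimeSystem_intClass {m : R} (s : Multiset (PrimeTo m)) :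
    (rayPrimeSystem m).intClass s = rayClass s :=
  sum_map_rayClass s

namespace IsQuadraticGenerator

variable {ω : R} {b e : ℤ} {m : ℕ} (h : IsQuadraticGenerator ω b e m)

include h

theorem exists_equiv_rayClass_absNorm (g : RayClassGroup (m : R)) :
    ∃ I : Ideal R, I ≠ ⊥ ∧ IsCoprime I (span {(m : R)}) ∧
      ∃ φ : {γ // γ ∈ I ∧ γ ∈ rayMonoid (m : R)} ≃
          {s // (rayPrimeSystem (m : R)).intClass s = g},
        ∀ γ, ((rayPrimeSystem (m : R)).intNorm (φ γ).1 : ℝ) =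
          absNorm (span {γ.1}) / absNorm I := by
  obtain ⟨t, ht⟩ := rayClass_surjective (-g)
  obtain ⟨φ, hφ⟩ := exists_equiv_rayClass (fun u ↦ h.eq_one_of_isUnit)
    (g := g) (t := t) (by rw [ht, add_neg_cancel])
  refine ⟨idealOf t, idealOf_ne_bot t, isCoprime_idealOf t,
    φ.trans (Equiv.subtypeEquivRight fun s ↦ by rw [rayPrimeSystem_intClass]), fun γ ↦ ?_⟩
  have ht0 : (absNorm (idealOf t) : ℝ) ≠ 0 :=
    Nat.cast_ne_zero.mpr (absNorm_eq_zero_iff.not.mpr (idealOf_ne_bot t))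
  rw [← hφ γ, map_mul, Nat.cast_mul, mul_div_cancel_right₀ _ ht0, rayPrimeSystem_intNorm]
  rfl

theorem summable_exp_intNorm (g : RayClassGroup (m : R)) {t : ℝ} (ht : 0 < t) :
    Summable fun s : {s // (rayPrimeSystem (m : R)).intClass s = g} ↦
      rexp (-((rayPrimeSystem (m : R)).intNorm s.1) * t) := by
  obtain ⟨I, hI, hIm, φ, hφ⟩ := h.exists_equiv_rayClass_absNorm g
  refine φ.summable_iff.mp ((h.summable_exp_absNorm_div hI hIm ht).congr fun γ ↦ ?_)
  rw [Function.comp_apply, hφ]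

theorem exists_abs_tsum_exp_intNorm_sub_le (g : RayClassGroup (m : R)) :
    ∃ C : ℝ, ∀ t : ℝ, 0 < t → t ≤ 1 →
      |(∑' s : {s // (rayPrimeSystem (m : R)).intClass s = g},
        rexp (-((rayPrimeSystem (m : R)).intNorm s.1) * t)) -
          π * (quadLattice ω 1).index / (√(m / 4) * m ^ 2) / t| ≤ C := by
  obtain ⟨I, hI, hIm, φ, hφ⟩ := h.exists_equiv_rayClass_absNorm g
  obtain ⟨C, hC⟩ := h.exists_abs_tsum_exp_absNorm_div_sub_le hI hIm
  refine ⟨C, fun t ht ht1 ↦ ?_⟩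
  rw [← φ.tsum_eq]
  simpa only [hφ] using hC t ht ht1

theorem exists_eq_span_natCast {P : Ideal R} [P.IsMaximal] (hP : ¬ (absNorm P).Prime) :
    ∃ p : ℕ, 0 < p ∧ P = span {(p : R)} := by
  obtain ⟨p, n, hn, hpP, hp, hnorm⟩ := exists_prime_and_absNorm_eq_pow P
  obtain ⟨J, hJ⟩ := dvd_span_singleton.mpr hpP
  have hmul : p ^ 2 = p ^ n * absNorm J := by
    rw [← h.absNorm_natCast, hJ, map_mul, hnorm]
  have hn2 : n ≤ 2 := (Nat.pow_dvd_pow_iff_le_right hp.one_lt).mp ⟨_, hmul⟩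
  obtain rfl : n = 2 := by
    rcases hn2.lt_or_eq with hlt | rfl
    · obtain rfl : n = 1 := by omega
      rw [hnorm, pow_one] at hP
      exact absurd hp hP
    · rfl
  rw [eq_comm, Nat.mul_eq_left (pow_ne_zero 2 hp.ne_zero), absNorm_eq_one_iff] at hmul
  exact ⟨p, hp.pos, by rw [hJ, hmul, mul_top]⟩

theorem summable_log_div_not_prime :
    Summable fun v : {v : PrimeTo (m : R) | ¬ (absNorm v.1.asIdeal).Prime} ↦
      log (absNorm v.1.1.asIdeal) / absNorm v.1.1.asIdeal := by
  have hmax (v : PrimeTo (m : R)) : v.1.asIdeal.IsMaximal := v.1.isMaximal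
  choose p hp hspan using
    fun v : {v : PrimeTo (m : R) | ¬ (absNorm v.1.asIdeal).Prime} ↦ h.exists_eq_span_natCast v.2
  have hinj : Function.Injective p := fun v w hvw ↦ by
    refine Subtype.ext (Subtype.ext (IsDedekindDomain.HeightOneSpectrum.ext ?_))
    rw [hspan, hspan, hvw]
  have hsum : Summable fun v ↦ log (p v) * (p v : ℝ) ^ (-2 : ℝ) :=
    summable_log_mul_rpow_neg hp
      (fun σ hσ ↦ (summable_nat_rpow.mpr (neg_lt_neg hσ)).comp_injective hinj) one_lt_two
  refine (hsum.mul_left 2).congr fun v ↦ ?_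
  rw [hspan, h.absNorm_natCast, rpow_neg (Nat.cast_nonneg _), rpow_two]
  push_cast
  rw [log_pow]
  ring

variable [Finite (ClassGroup R)]

theorem exists_hasThetaAsymptotics :
    ∃ κ C : ℝ, 0 < κ ∧ (rayPrimeSystem (m : R)).HasThetaAsymptotics κ C := by
  have := h.finite_quotient
  have := finite_rayClassGroup (m := (m : R))
  choose C hC using h.exists_abs_tsum_exp_intNorm_sub_le
  obtain ⟨B, hB⟩ := (Set.finite_range C).bddAbove
  have hm0 : (0 : ℝ) < m := Nat.cast_pos.mpr h.pos
  have hindex : (0 : ℝ) < (quadLattice ω 1).index :=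
    Nat.cast_pos.mpr (Nat.pos_of_ne_zero h.index_quadLattice_one_ne_zero)
  refine ⟨π * (quadLattice ω 1).index / (√(m / 4) * m ^ 2), B, by positivity, fun {t} ht ↦ ?_,
    fun g t ht ht1 ↦ (hC g t ht ht1).trans (hB ⟨g, rfl⟩)⟩
  refine (Equiv.sigmaFiberEquiv (rayPrimeSystem (m : R)).intClass).summable_iff.mp ?_
  exact (summable_sigma_of_nonneg fun _ ↦ (exp_pos _).le).mpr
    ⟨fun g ↦ h.summable_exp_intNorm g ht, .of_finite⟩

theorem not_summable_log_div (g : RayClassGroup (m : R)) :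
    ¬ Summable fun v : {v : PrimeTo (m : R) // rayClass {v} = g} ↦
      log (absNorm v.1.1.asIdeal) / absNorm v.1.1.asIdeal := by
  have := h.finite_quotient
  have := finite_rayClassGroup (m := (m : R))
  obtain ⟨κ, C, hκ, hA⟩ := h.exists_hasThetaAsymptotics
  exact hA.not_summable_log_div hκ g

theorem infinite_setOf_prime_absNorm (g : RayClassGroup (m : R)) :
    {v : PrimeTo (m : R) | rayClass {v} = g ∧ (absNorm v.1.asIdeal).Prime}.Infinite := by
  intro hfin
  refine h.not_summable_log_div g ?_
  set F : PrimeTo (m : R) → ℝ := fun v ↦ log (absNorm v.1.asIdeal) / absNorm v.1.asIdeal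
  have hF (v) : 0 ≤ F v := div_nonneg (log_natCast_nonneg _) (Nat.cast_nonneg _)
  set A : Set (PrimeTo (m : R)) := {v | rayClass {v} = g ∧ (absNorm v.1.asIdeal).Prime}
  set B : Set (PrimeTo (m : R)) := {v | ¬ (absNorm v.1.asIdeal).Prime}
  have hA : Summable (A.indicator F) :=
    summable_of_hasFiniteSupport (hfin.subset Set.support_indicator_subset)
  have hB : Summable (B.indicator F) :=
    summable_subtype_iff_indicator.mp h.summable_log_div_not_prime
  refine ((hA.add hB).comp_injective Subtype.val_injective).of_nonneg_of_le
    (fun v ↦ hF v.1) fun v ↦ ?_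
  by_cases hv : (absNorm v.1.1.asIdeal).Prime
  · simp [A, B, hv, v.2, F]
  · simp [A, B, hv, F]

end IsQuadraticGenerator

end PrimesInRayClass

section RepresentedPrimes

open Ideal

theorem natCard_le_of_intCast_surjective {S : Type*} [Ring S]
    (hS : Function.Surjective (Int.cast : ℤ → S)) {n : ℕ} (hn : 0 < n) (hn0 : (n : S) = 0) :
    Nat.card S ≤ n := by
  have hn' : (n : ℤ) ≠ 0 := Nat.cast_ne_zero.mpr hn.ne'
  refine (Nat.card_le_card_of_surjective (fun i : Fin n ↦ ((i : ℕ) : S)) fun x ↦ ?_).trans_eq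
    (Nat.card_fin n)
  obtain ⟨k, rfl⟩ := hS x
  lift k % n to ℕ using Int.emod_nonneg k hn' with r hr
  have hlt : r < n := by
    zify
    rw [hr]
    exact Int.emod_lt_of_pos k (Nat.cast_pos.mpr hn)
  refine ⟨⟨r, hlt⟩, ?_⟩
  rw [← Int.emod_add_mul_ediv k n, ← hr]
  simp [hn0]

variable {R : Type*} [CommRing R]

theorem isCoprime_span_pair_left {a : ℤ} {m : ℕ} (ham : IsCoprime a m) (ω : R) :
    IsCoprime (span {(a : R), ω}) (span {(m : R)}) := by
  obtain ⟨u, v, huv⟩ := ham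
  have huv' : (u : R) * a + v * m = 1 := by exact_mod_cast congrArg (Int.cast : ℤ → R) huv
  exact isCoprime_iff_exists.mpr ⟨u * a, mul_mem_left _ _ (subset_span (by simp)), v * m,
    mul_mem_left _ _ (mem_span_singleton_self _), huv'⟩

-- The product has the generators `a²`, `a (b - ω)`, `a ω` and `ω (b - ω) = a c`.
theorem span_pair_mul_conj {ω : R} {a b c : ℤ} (hω : ω ^ 2 = b * ω - a * c)
    (habc : Int.gcd a (Int.gcd b c) = 1) :
    span {(a : R), ω} * span {(a : R), b - ω} = span {(a : R)} := by
  rw [span_pair_mul_span_pair]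
  refine le_antisymm (span_le.mpr ?_) ((span_singleton_le_iff_mem _).mpr ?_)
  · rintro x (rfl | rfl | rfl | rfl) <;> rw [SetLike.mem_coe, mem_span_singleton]
    · exact dvd_mul_right _ _
    · exact dvd_mul_right _ _
    · exact dvd_mul_left _ _
    · exact ⟨c, by linear_combination -hω⟩
  · obtain ⟨u, v, huv⟩ := Int.isCoprime_iff_gcd_eq_one.mpr habc
    rw [Int.gcd_eq_gcd_ab b c] at huv
    have huv' : (u : R) * a + v * (b * b.gcdA c + c * b.gcdB c) = 1 := by
      exact_mod_cast congrArg (Int.cast : ℤ → R) huv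
    set J := span {(a * a : R), a * (b - ω), ω * a, ω * (b - ω)}
    have hmem : u * (a * a) + v * b.gcdA c * (a * (b - ω)) + v * b.gcdA c * (ω * a) +
        v * b.gcdB c * (ω * (b - ω)) ∈ J := by
      refine add_mem (add_mem (add_mem ?_ ?_) ?_) ?_ <;>
        exact mul_mem_left _ _ (subset_span (by simp))
    convert hmem using 1
    linear_combination (-(a : R)) * huv' + v * b.gcdB c * hω

variable [IsDedekindDomain R] [Module.Free ℤ R]

theorem absNorm_span_pair_le {ω : R} {a : ℤ} {m : ℕ} (ha : 0 < a) (ham : IsCoprime a m)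
    (hω : ∀ α : R, ∃ X Y : ℤ, (m : R) * α = X + Y * ω) :
    (absNorm (span {(a : R), ω}) : ℤ) ≤ a := by
  lift a to ℕ using ha.le
  rw [Nat.cast_pos] at ha
  rw [Nat.cast_le, absNorm_apply, Submodule.cardQuot_apply]
  refine natCard_le_of_intCast_surjective (fun x ↦ ?_) ha ?_
  · obtain ⟨α, rfl⟩ := Ideal.Quotient.mk_surjective x
    obtain ⟨X, Y, hXY⟩ := hω α
    obtain ⟨u, w, huw⟩ := ham
    have huw' : (u : R) * a + w * m = 1 := by exact_mod_cast congrArg (Int.cast : ℤ → R) huw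
    refine ⟨w * X, ?_⟩
    rw [← map_intCast (Ideal.Quotient.mk (span {((a : ℤ) : R), ω})), Ideal.Quotient.eq,
      mem_span_pair]
    refine ⟨-(u * α), -(w * Y), ?_⟩
    push_cast
    linear_combination (-α) * huw' + w * hXY
  · rw [← map_natCast (Ideal.Quotient.mk (span {((a : ℤ) : R), ω})),
      Ideal.Quotient.eq_zero_iff_mem]
    exact subset_span (by simp)

namespace IsQuadraticGenerator

variable {ω : R} {a b c : ℤ} {m : ℕ} (h : IsQuadraticGenerator ω b (a * c) m)
  (hω : ω ^ 2 = b * ω - a * c) (habc : Int.gcd a (Int.gcd b c) = 1) (ham : IsCoprime a m)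

include h hω habc ham

theorem absNorm_span_pair (ha : 0 < a) : (absNorm (span {(a : R), ω}) : ℤ) = a := by
  have hle := absNorm_span_pair_le ha ham h.exists_mul_eq
  have hle_conj := absNorm_span_pair_le (ω := b - ω) ha ham fun α ↦ by
    obtain ⟨X, Y, hXY⟩ := h.exists_mul_eq α
    exact ⟨X + b * Y, -Y, by rw [hXY]; push_cast; ring⟩
  have hmul : (absNorm (span {(a : R), ω}) : ℤ) * absNorm (span {(a : R), b - ω}) = a * a := by
    have hnorm := h.absNorm_eq a 0
    rw [Int.cast_zero, zero_mul, add_zero, ← span_pair_mul_conj hω habc, map_mul] at hnorm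
    push_cast at hnorm
    linear_combination hnorm
  refine le_antisymm hle (le_of_not_gt fun hlt ↦ ?_)
  nlinarith [mul_le_mul_of_nonneg_left hle_conj (Nat.cast_nonneg (absNorm (span {(a : R), ω})))]

theorem dvd_of_mem_span_pair {X Y : ℤ} (hXY : (X + Y * ω : R) ∈ span {(a : R), ω}) : a ∣ X := by
  have hX : (X : R) ∈ span {(a : R), ω} := by
    simpa using sub_mem hXY (mul_mem_left _ (Y : R) (subset_span (by simp : ω ∈ {(a : R), ω})))
  have hXω := mul_mem_mul hX (subset_span (by simp) : b - ω ∈ span {(a : R), b - ω})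
  rw [span_pair_mul_conj hω habc, mem_span_singleton] at hXω
  obtain ⟨β, hβ⟩ := hXω
  obtain ⟨X', Y', hXY'⟩ := h.exists_mul_eq β
  have hcoord := h.eq_and_eq (X := m * X * b) (Y := -(m * X)) (X' := a * X') (Y' := a * Y') (by
    push_cast
    linear_combination m * hβ + a * hXY')
  exact ham.dvd_of_dvd_mul_left ⟨-Y', by linear_combination -hcoord.2⟩

theorem exists_form_eq_absNorm (ha : 0 < a) {J : Ideal R} {γ : R}
    (hJ : J * span {(a : R), ω} = span {γ}) (hγ : (m : R) ∣ γ - 1) :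
    ∃ x y : ℤ, a * x ^ 2 + b * x * y + c * y ^ 2 = absNorm J := by
  obtain ⟨α, hα⟩ := hγ
  obtain ⟨X, Y, hXY⟩ := h.exists_mul_eq α
  have hγXY : γ = ((X + 1 : ℤ) : R) + Y * ω := by
    push_cast
    linear_combination hα + hXY
  have hmem : γ ∈ span {(a : R), ω} := by
    have hγJ : γ ∈ J * span {(a : R), ω} := hJ ▸ mem_span_singleton_self γ
    exact Ideal.mul_le_right hγJ
  rw [hγXY] at hmem
  obtain ⟨x, hx⟩ := h.dvd_of_mem_span_pair hω habc ham hmem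
  have hnorm := h.absNorm_eq (X + 1) Y
  rw [← hγXY, ← hJ, map_mul, Nat.cast_mul, h.absNorm_span_pair hω habc ham ha, hx] at hnorm
  exact ⟨x, Y, mul_left_cancel₀ ha.ne' (by linear_combination -hnorm)⟩

theorem exists_rayClass_forall_form_eq (ha : 0 < a) :
    ∃ g : RayClassGroup (m : R), ∀ v : PrimeTo (m : R), rayClass {v} = g →
      ∃ x y : ℤ, a * x ^ 2 + b * x * y + c * y ^ 2 = absNorm v.1.asIdeal := by
  have hne : span {(a : R), ω} ≠ ⊥ := fun hbot ↦ by
    have hnorm := h.absNorm_span_pair hω habc ham ha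
    rw [hbot, absNorm_bot, Nat.cast_zero] at hnorm
    exact ha.ne hnorm
  obtain ⟨t, ht⟩ := exists_idealOf_eq hne (isCoprime_span_pair_left ham ω)
  refine ⟨-rayClass t, fun v hv ↦ ?_⟩
  obtain ⟨γ, hγ, hspan⟩ : ∃ γ ∈ rayMonoid (m : R), idealOf ({v} + t) = span {γ} := by
    rw [← rayClass_eq_zero_iff, rayClass_add, hv, neg_add_cancel]
  rw [idealOf_add, idealOf_singleton, ht] at hspan
  exact h.exists_form_eq_absNorm hω habc ham ha hspan hγ.2

theorem infinite_setOf_prime_represented [Module.Finite ℤ R] [CharZero R] [Finite (ClassGroup R)]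
    (ha : 0 < a) :
    {p : ℕ | p.Prime ∧ ∃ x y : ℤ, a * x ^ 2 + b * x * y + c * y ^ 2 = p}.Infinite := by
  obtain ⟨g, hg⟩ := h.exists_rayClass_forall_form_eq hω habc ham ha
  intro hfin
  have hinj : Function.Injective fun v : PrimeTo (m : R) ↦ v.1.asIdeal := fun v w hvw ↦
    Subtype.ext (IsDedekindDomain.HeightOneSpectrum.ext hvw)
  have hfiber (p : ℕ) : {v : PrimeTo (m : R) | absNorm v.1.asIdeal = p}.Finite :=
    (finite_setOfPred_absNorm_eq p).preimage hinj.injOn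
  exact h.infinite_setOf_prime_absNorm g
    ((hfin.preimage' fun p _ ↦ hfiber p).subset fun v hv ↦ ⟨hv.2, hg v hv.1⟩)

end IsQuadraticGenerator

end RepresentedPrimes

section QuadraticField

open NumberField QuadraticAlgebra

theorem three_le_of_eq_four_mul_sub_sq {b e m : ℤ} (hm : 0 < m) (hdisc : m = 4 * e - b ^ 2) :
    3 ≤ m := by
  rcases Int.even_or_odd' b with ⟨k, rfl | rfl⟩
  · have : m = 4 * (e - k ^ 2) := by rw [hdisc]; ring
    lia
  · have : m = 4 * (e - k ^ 2 - k) - 1 := by rw [hdisc]; ring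
    lia

variable {b e : ℤ} [Fact (∀ r : ℚ, r ^ 2 ≠ -e + b * r)]

instance : NumberField (QuadraticAlgebra ℚ (-e) b) where
  to_charZero := inferInstance
  to_finiteDimensional := inferInstance

theorem algebraNorm_eq_norm (z : QuadraticAlgebra ℚ (-e) b) :
    Algebra.norm ℚ z = z.norm := by
  rw [← det_toLinearMap_eq_norm, Algebra.norm_apply]
  rfl

theorem exists_intCast_eq_trace {z : QuadraticAlgebra ℚ (-e) b} (hz : IsIntegral ℤ z) :
    ∃ n : ℤ, (n : ℚ) = z.trace := by
  have hint : IsIntegral ℤ (z + star z) := hz.add (map_isIntegral_int (starRingEnd _) hz)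
  rw [← algebraMap_trace_eq_add_star,
    isIntegral_algebraMap_iff (FaithfulSMul.algebraMap_injective ℚ _)] at hint
  exact IsIntegrallyClosed.isIntegral_iff.mp hint

theorem isIntegral_omega : IsIntegral ℤ (ω : QuadraticAlgebra ℚ (-e) b) := by
  refine ⟨Polynomial.X ^ 2 - Polynomial.C b * Polynomial.X + Polynomial.C e, by monicity!, ?_⟩
  simp only [Polynomial.eval₂_add, Polynomial.eval₂_sub, Polynomial.eval₂_mul,
    Polynomial.eval₂_X, Polynomial.eval₂_C, sq, omega_mul_omega_eq_mk]
  ext <;> simp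

variable (b e) in
/-- The root `ω` of `X² - bX + e`, as an algebraic integer of the quadratic field it generates. -/
def integralOmega : 𝓞 (QuadraticAlgebra ℚ (-e) b) := ⟨ω, isIntegral_omega⟩

theorem coe_integralOmega : (integralOmega b e : QuadraticAlgebra ℚ (-e) b) = ω := rfl

theorem integralOmega_sq : integralOmega b e ^ 2 = b * integralOmega b e - e := by
  refine RingOfIntegers.ext ?_
  ext <;> simp [sq, coe_integralOmega]

theorem norm_add_mul_integralOmega (X Y : ℤ) :
    Algebra.norm ℤ (X + Y * integralOmega b e : 𝓞 (QuadraticAlgebra ℚ (-e) b)) =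
      X ^ 2 + b * X * Y + e * Y ^ 2 := by
  rw [← Int.cast_inj (α := ℚ), Algebra.coe_norm_int, algebraNorm_eq_norm, norm_def]
  simp only [map_add, map_mul, map_intCast, coe_integralOmega, re_add, re_intCast, re_mul,
    omega_re, mul_zero, im_intCast, omega_im, mul_one, add_zero, im_add, im_mul, zero_add, neg_mul,
    sub_neg_eq_add, Int.cast_add, Int.cast_pow, Int.cast_mul]
  ring

-- The coordinates of `α` solve the linear system given by the traces of `α` and `α ω`, whose
-- determinant is `-m`.
theorem exists_mul_eq_add_mul_integralOmega {m : ℤ} (hm : m = 4 * e - b ^ 2)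
    (α : 𝓞 (QuadraticAlgebra ℚ (-e) b)) : ∃ X Y : ℤ, m * α = X + Y * integralOmega b e := by
  have hα := RingOfIntegers.isIntegral_coe α
  obtain ⟨T, hT⟩ := exists_intCast_eq_trace hα
  obtain ⟨U, hU⟩ := exists_intCast_eq_trace (hα.mul isIntegral_omega)
  simp only [trace_def, re_mul, im_mul, omega_re, omega_im] at hT hU
  obtain ⟨X, hX⟩ : ∃ X : ℤ, (X : ℚ) = m * (α : QuadraticAlgebra ℚ (-e) b).re :=
    ⟨b * U - (b ^ 2 - 2 * e) * T, by push_cast [hT, hU, hm]; ring⟩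
  obtain ⟨Y, hY⟩ : ∃ Y : ℤ, (Y : ℚ) = m * (α : QuadraticAlgebra ℚ (-e) b).im :=
    ⟨b * T - 2 * U, by push_cast [hT, hU, hm]; ring⟩
  refine ⟨X, Y, RingOfIntegers.ext ?_⟩
  ext <;> simp [coe_integralOmega, hX, hY]

theorem isQuadraticGenerator_integralOmega {m : ℕ} (hm : 0 < m)
    (hdisc : (m : ℤ) = 4 * e - b ^ 2) : IsQuadraticGenerator (integralOmega b e) b e m where
  three_le := by exact_mod_cast three_le_of_eq_four_mul_sub_sq (Nat.cast_pos.mpr hm) hdisc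
  disc := hdisc
  exists_mul_eq α := by exact_mod_cast exists_mul_eq_add_mul_integralOmega hdisc α
  absNorm_eq X Y := by
    rw [Ideal.absNorm_span_singleton, norm_add_mul_integralOmega, Int.natCast_natAbs,
      abs_of_nonneg]
    nlinarith [sq_nonneg (2 * X + b * Y),
      mul_nonneg (Nat.cast_nonneg m : (0 : ℤ) ≤ m) (sq_nonneg Y)]

end QuadraticField

section BinaryForms

variable {a b c : ℤ}

theorem infinite_setOf_prime_represented_of_isCoprime {m : ℕ} (ha : 0 < a)
    (habc : Int.gcd a (Int.gcd b c) = 1) (hm : 0 < m) (hdisc : (m : ℤ) = 4 * (a * c) - b ^ 2)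
    (ham : IsCoprime a m) :
    {p : ℕ | p.Prime ∧ ∃ x y : ℤ, a * x ^ 2 + b * x * y + c * y ^ 2 = p}.Infinite := by
  have : Fact (∀ r : ℚ, r ^ 2 ≠ -((a * c : ℤ) : ℚ) + b * r) := ⟨fun r hr ↦ by
    have hdiscQ : (m : ℚ) = 4 * (a * c : ℤ) - b ^ 2 := by exact_mod_cast hdisc
    have hmQ : (0 : ℚ) < m := Nat.cast_pos.mpr hm
    nlinarith [sq_nonneg (2 * r - b)]⟩
  exact (isQuadraticGenerator_integralOmega hm hdisc).infinite_setOf_prime_represented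
    (by exact_mod_cast integralOmega_sq) habc ham ha

theorem natCast_dvd_prod_filter_primeFactors_iff {m p : ℕ} (hm : m ≠ 0) (hp : p.Prime)
    (P : ℕ → Prop) [DecidablePred P] :
    (p : ℤ) ∣ ((∏ l ∈ m.primeFactors with P l, l : ℕ) : ℤ) ↔ p ∣ m ∧ P p := by
  rw [Int.natCast_dvd_natCast, hp.prime.dvd_finsetProd_iff]
  constructor
  · rintro ⟨l, hl, hpl⟩
    rw [Finset.mem_filter, Nat.mem_primeFactors] at hl
    obtain rfl := (Nat.prime_dvd_prime_iff_eq hp hl.1.1).mp hpl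
    exact ⟨hl.1.2.1, hl.2⟩
  · rintro ⟨hpm, hPp⟩
    exact ⟨p, Finset.mem_filter.mpr ⟨Nat.mem_primeFactors.mpr ⟨hp, hpm, hm⟩, hPp⟩, dvd_rfl⟩

theorem isCoprime_of_forall_prime_not_dvd {x y : ℤ}
    (h : ∀ p : ℕ, p.Prime → (p : ℤ) ∣ x → ¬ (p : ℤ) ∣ y) : IsCoprime x y := by
  rw [Int.isCoprime_iff_nat_coprime]
  exact Nat.Coprime.symm (Nat.coprime_of_dvd fun p hp hpy hpx ↦
    h p hp (Int.natCast_dvd.mpr hpx) (Int.natCast_dvd.mpr hpy))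

-- Modulo `p` the form reduces to `a x²`, to `c y²` or to `b x y`, with `x` and `y` invertible.
theorem not_dvd_form_of_dvd_iff {p x y : ℤ} (hp : Prime p)
    (hprim : ¬ (p ∣ a ∧ p ∣ b ∧ p ∣ c)) (hx : p ∣ x ↔ p ∣ a ∧ ¬ p ∣ c) (hy : p ∣ y ↔ ¬ p ∣ a) :
    ¬ p ∣ a * x ^ 2 + b * x * y + c * y ^ 2 := by
  by_cases hpa : p ∣ a
  · have hpy : ¬ p ∣ y := by tauto
    rw [add_assoc, dvd_add_right (hpa.mul_right _)]
    by_cases hpc : p ∣ c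
    · have hpx : ¬ p ∣ x := by tauto
      have hpb : ¬ p ∣ b := by tauto
      rw [dvd_add_left (hpc.mul_right _)]
      exact hp.not_dvd_mul (hp.not_dvd_mul hpb hpx) hpy
    · rw [dvd_add_right (((hx.mpr ⟨hpa, hpc⟩).mul_left b).mul_right y)]
      exact hp.not_dvd_mul hpc (mt hp.dvd_of_dvd_pow hpy)
  · have hpx : ¬ p ∣ x := by tauto
    have hpy : p ∣ y := hy.mpr hpa
    rw [add_assoc, dvd_add_left (dvd_add (hpy.mul_left _) ((dvd_pow hpy two_ne_zero).mul_left c))]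
    exact hp.not_dvd_mul hpa (mt hp.dvd_of_dvd_pow hpx)

theorem exists_isCoprime_form {m : ℕ} (habc : Int.gcd a (Int.gcd b c) = 1) (hm : m ≠ 0) :
    ∃ x y : ℤ, IsCoprime x y ∧ IsCoprime (a * x ^ 2 + b * x * y + c * y ^ 2) m := by
  classical
  have hx {p : ℕ} (hp : p.Prime) := natCast_dvd_prod_filter_primeFactors_iff hm hp
    fun p ↦ (p : ℤ) ∣ a ∧ ¬ (p : ℤ) ∣ c
  have hy {p : ℕ} (hp : p.Prime) := natCast_dvd_prod_filter_primeFactors_iff hm hp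
    fun p ↦ ¬ (p : ℤ) ∣ a
  refine ⟨_, _, isCoprime_of_forall_prime_not_dvd fun p hp hpx hpy ↦
      ((hy hp).mp hpy).2 ((hx hp).mp hpx).2.1,
    (isCoprime_of_forall_prime_not_dvd fun p hp hpm ↦ ?_).symm⟩
  have hp' : Prime (p : ℤ) := Nat.prime_iff_prime_int.mp hp
  have hpm' : p ∣ m := Int.natCast_dvd_natCast.mp hpm
  refine not_dvd_form_of_dvd_iff hp' (fun ⟨hpa, hpb, hpc⟩ ↦ hp'.not_isUnit ?_)
    ((hx hp).trans (and_iff_right hpm')) ((hy hp).trans (and_iff_right hpm'))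
  exact isUnit_of_dvd_one (by simpa [habc] using Int.dvd_coe_gcd hpa (Int.dvd_coe_gcd hpb hpc))

theorem form_pos {x y : ℤ} (ha : 0 < a) (hdisc : b ^ 2 - 4 * a * c < 0) (hxy : IsCoprime x y) :
    0 < a * x ^ 2 + b * x * y + c * y ^ 2 := by
  rcases eq_or_ne y 0 with rfl | hy
  · have hx : x ≠ 0 := by
      rintro rfl
      exact not_isCoprime_zero_zero hxy
    nlinarith [mul_pos ha (sq_pos_of_ne_zero hx)]
  · have hsquare : 4 * a * (a * x ^ 2 + b * x * y + c * y ^ 2) =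
        (2 * a * x + b * y) ^ 2 + (4 * a * c - b ^ 2) * y ^ 2 := by ring
    have hprod : 0 < 4 * a * (a * x ^ 2 + b * x * y + c * y ^ 2) := by
      rw [hsquare]
      nlinarith [sq_nonneg (2 * a * x + b * y), mul_pos (neg_pos.mpr hdisc) (sq_pos_of_ne_zero hy)]
    exact pos_of_mul_pos_right hprod (by positivity)

theorem gcd_eq_one_of_isCoprime_disc {m : ℤ} (hm : m = 4 * (a * c) - b ^ 2)
    (ham : IsCoprime a m) : Int.gcd a (Int.gcd b c) = 1 := by
  rw [← Int.isCoprime_iff_gcd_eq_one]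
  refine isCoprime_of_forall_prime_not_dvd fun p hp hpa hpbc ↦
    (Nat.prime_iff_prime_int.mp hp).not_isUnit (ham.isUnit_of_dvd' hpa ?_)
  rw [hm]
  exact dvd_sub ((hpa.mul_right _).mul_left _)
    (dvd_pow (hpbc.trans (Int.gcd_dvd_left _ _)) two_ne_zero)

-- A unimodular substitution turns a represented value coprime to the discriminant into the
-- leading coefficient.
theorem infinite_setOf_prime_represented (ha : 0 < a) (habc : Int.gcd a (Int.gcd b c) = 1)
    (hdisc : b ^ 2 - 4 * a * c < 0) :
    {p : ℕ | p.Prime ∧ ∃ x y : ℤ, a * x ^ 2 + b * x * y + c * y ^ 2 = p}.Infinite := by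
  have hpos : 0 < 4 * (a * c) - b ^ 2 := by linarith
  lift 4 * (a * c) - b ^ 2 to ℕ using hpos.le with m hm
  rw [Nat.cast_pos] at hpos
  obtain ⟨x, y, hxy, hcop⟩ := exists_isCoprime_form habc hpos.ne'
  have ⟨u, v, huv⟩ := hxy
  have hdisc' : (m : ℤ) = 4 * ((a * x ^ 2 + b * x * y + c * y ^ 2) *
      (a * v ^ 2 - b * u * v + c * u ^ 2)) -
      (-2 * a * x * v + b * (x * u - y * v) + 2 * c * y * u) ^ 2 := by
    rw [hm, ← mul_one (4 * (a * c) - b ^ 2), ← one_pow 2, ← huv]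
    ring
  refine (infinite_setOf_prime_represented_of_isCoprime (form_pos ha hdisc hxy)
    (gcd_eq_one_of_isCoprime_disc hdisc' hcop) hpos hdisc' hcop).mono ?_
  rintro p ⟨hp, s, t, hst⟩
  refine ⟨hp, x * s - v * t, y * s + u * t, ?_⟩
  rw [← hst]
  ring

theorem gcd_eq_one_of_form_eq_prime {x y : ℤ} {p : ℕ} (hp : p.Prime)
    (h : a * x ^ 2 + b * x * y + c * y ^ 2 = p) : Int.gcd x y = 1 := by
  obtain ⟨s, hs⟩ := Int.gcd_dvd_left x y
  obtain ⟨t, ht⟩ := Int.gcd_dvd_right x y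
  set g := Int.gcd x y
  have hsq : ((g * g : ℕ) : ℤ) ∣ (p : ℤ) :=
    ⟨a * s ^ 2 + b * s * t + c * t ^ 2, by rw [← h, hs, ht]; push_cast; ring⟩
  exact Nat.isUnit_iff.mp (hp.prime.irreducible.squarefree g (Int.natCast_dvd_natCast.mp hsq))

end BinaryForms

theorem weber_primes_represented (a b c : ℤ)
    (hprim : Int.gcd a (Int.gcd b c) = 1)
    (ha : 0 < a) (hdisc : b ^ 2 - 4 * a * c < 0)
    (N : ℤ) (hN : 1 ≤ N) :
    {p : ℕ | p.Prime ∧ Odd p ∧ ¬ (p : ℤ) ∣ N ∧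
      ∃ x y : ℤ, a * x ^ 2 + b * x * y + c * y ^ 2 = p}.Infinite ∧
    ∃ (x y : ℤ) (p : ℕ), p.Prime ∧ Odd p ∧ ¬ (p : ℤ) ∣ N ∧
      a * x ^ 2 + b * x * y + c * y ^ 2 = p ∧ Int.gcd x y = 1 := by
  have hinf : {p : ℕ | p.Prime ∧ Odd p ∧ ¬ (p : ℤ) ∣ N ∧
      ∃ x y : ℤ, a * x ^ 2 + b * x * y + c * y ^ 2 = p}.Infinite := by
    refine ((infinite_setOf_prime_represented ha hprim hdisc).sdiff
      (Set.finite_Iic (2 + N.toNat))).mono ?_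
    rintro p ⟨⟨hp, hrep⟩, hlarge⟩
    rw [Set.mem_Iic, not_le] at hlarge
    refine ⟨hp, hp.odd_of_ne_two (by lia), fun hdvd ↦ ?_, hrep⟩
    have hpN := Int.le_of_dvd (by lia) hdvd
    lia
  obtain ⟨p, hp, hodd, hpN, x, y, hxy⟩ := hinf.nonempty
  exact ⟨hinf, x, y, p, hp, hodd, hpN, hxy, gcd_eq_one_of_form_eq_prime hp hxy⟩
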